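/- arXiv:2204.09512 — 6 statements merged into one kernel-verified Lean document; each statement's English description precedes it below -/
import Mathlib

section
/- For any poset P, the set 𝐝(Σ P) of closed d-sets of the Scott space Σ P, ordered by inclusion, is a dcpo, and the Scott space Σ 𝐝(Σ P) together with the map η : Σ P → Σ 𝐝(Σ P), η(x) = ↓x, is a d-reflection of Σ P: η is continuous, Σ 𝐝(Σ P) is a d-space, and for every continuous map f : Σ P → Y to a d-space Y there is a unique continuous map f* : Σ 𝐝(Σ P) → Y with f* ∘ η = f. -/
universe u v

open Set

/-- The specialization order on a topological space: `specLE x y` iff `x ∈ closure {y}`. -/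
def specLE {X : Type*} [TopologicalSpace X] (x y : X) : Prop :=
  x ∈ closure ({y} : Set X)

/-- `a` is an upper bound of `D` with respect to the specialization order. -/
def specUB {X : Type*} [TopologicalSpace X] (D : Set X) (a : X) : Prop :=
  ∀ d ∈ D, specLE d a

/-- `a` is a least upper bound of `D` with respect to the specialization order. -/
def specLUB {X : Type*} [TopologicalSpace X] (D : Set X) (a : X) : Prop :=
  specUB D a ∧ ∀ b, specUB D b → specLE a b

/-- `U` is Scott open with respect to the specialization order. -/
def ScottOpenSpec {X : Type*} [TopologicalSpace X] (U : Set X) : Prop :=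
  (∀ x y, specLE x y → x ∈ U → y ∈ U) ∧
  ∀ D : Set X, D.Nonempty → DirectedOn specLE D → ∀ a, specLUB D a → a ∈ U →
    (D ∩ U).Nonempty

/-- A d-space (monotone convergence space): a T0 space which is a dcpo in its
specialization order and in which every open set is Scott open with respect to
the specialization order. -/
def DSpace (X : Type*) [TopologicalSpace X] : Prop :=
  T0Space X ∧
  (∀ D : Set X, D.Nonempty → DirectedOn specLE D → ∃ a, specLUB D a) ∧
  (∀ U : Set X, IsOpen U → ScottOpenSpec U)

/-- A set is saturated if it is an intersection of open sets. -/
def Saturated {X : Type*} [TopologicalSpace X] (A : Set X) : Prop :=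
  ∃ 𝒰 : Set (Set X), (∀ U ∈ 𝒰, IsOpen U) ∧ A = ⋂₀ 𝒰

/-- A T0 space is well-filtered if every filtered (under reverse inclusion) family of
nonempty compact saturated sets whose intersection is contained in an open set `U`
has a member contained in `U`. -/
def WellFiltered (X : Type*) [TopologicalSpace X] : Prop :=
  T0Space X ∧
  ∀ 𝒦 : Set (Set X), 𝒦.Nonempty →
    (∀ K ∈ 𝒦, K.Nonempty ∧ IsCompact K ∧ Saturated K) →
    DirectedOn (fun A B => B ⊆ A) 𝒦 →
    ∀ U : Set X, IsOpen U → ⋂₀ 𝒦 ⊆ U → ∃ K ∈ 𝒦, K ⊆ U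

/-- A nonempty closed set which is irreducible. -/
def IrredClosed {X : Type*} [TopologicalSpace X] (A : Set X) : Prop :=
  A.Nonempty ∧ IsClosed A ∧
  ∀ F₁ F₂ : Set X, IsClosed F₁ → IsClosed F₂ → A ⊆ F₁ ∪ F₂ → (A ⊆ F₁ ∨ A ⊆ F₂)

/-- A space is sober if every irreducible closed set is the closure of a unique point. -/
def Sober (X : Type*) [TopologicalSpace X] : Prop :=
  ∀ A : Set X, IrredClosed A → ∃! x : X, A = closure ({x} : Set X)

/-- The specialization preorder on a topological space. -/
def specPreorder (Y : Type*) [TopologicalSpace Y] : Preorder Y where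
  le := specLE
  le_refl x := subset_closure rfl
  le_trans x y z hxy hyz :=
    closure_minimal (Set.singleton_subset_iff.mpr hyz) isClosed_closure hxy

/-- A Scott open subset of a poset: an upper set inaccessible by suprema of directed sets. -/
def IsScottOpen {P : Type*} [Preorder P] (U : Set P) : Prop :=
  IsUpperSet U ∧
  ∀ D : Set P, D.Nonempty → DirectedOn (· ≤ ·) D → ∀ a, IsLUB D a → a ∈ U →
    (D ∩ U).Nonempty

/-- The Scott topology on a poset. `Σ P` is `P` equipped with `scottTop P`. -/
def scottTop (P : Type*) [Preorder P] : TopologicalSpace P where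
  IsOpen := IsScottOpen
  isOpen_univ := by
    refine ⟨isUpperSet_univ, fun D hD _ _ _ _ => ?_⟩
    obtain ⟨d, hd⟩ := hD
    exact ⟨d, hd, trivial⟩
  isOpen_inter := by
    rintro U V ⟨hU1, hU2⟩ ⟨hV1, hV2⟩
    refine ⟨hU1.inter hV1, ?_⟩
    rintro D hne hdir a ha ⟨haU, haV⟩
    obtain ⟨d1, hd1D, hd1U⟩ := hU2 D hne hdir a ha haU
    obtain ⟨d2, hd2D, hd2V⟩ := hV2 D hne hdir a ha haV
    obtain ⟨d3, hd3D, h13, h23⟩ := hdir d1 hd1D d2 hd2D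
    exact ⟨d3, hd3D, hU1 h13 hd1U, hV1 h23 hd2V⟩
  isOpen_sUnion := by
    intro S hS
    refine ⟨isUpperSet_sUnion fun s hs => (hS s hs).1, ?_⟩
    rintro D hne hdir a ha ⟨U, hUS, haU⟩
    obtain ⟨d, hdD, hdU⟩ := (hS U hUS).2 D hne hdir a ha haU
    exact ⟨d, hdD, U, hUS, hdU⟩

/-- A dcpo: every nonempty directed subset has a least upper bound. -/
def IsDcpo (P : Type*) [Preorder P] : Prop :=
  ∀ D : Set P, D.Nonempty → DirectedOn (· ≤ ·) D → ∃ a, IsLUB D a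

/-- The way-below relation. -/
def wayBelow {P : Type*} [Preorder P] (x y : P) : Prop :=
  ∀ D : Set P, D.Nonempty → DirectedOn (· ≤ ·) D → ∀ a, IsLUB D a → y ≤ a →
    ∃ d ∈ D, x ≤ d

/-- A poset is Noetherian if every (nonempty) directed subset has a greatest member. -/
def Noetherian (P : Type*) [Preorder P] : Prop :=
  ∀ D : Set P, D.Nonempty → DirectedOn (· ≤ ·) D → ∃ m ∈ D, ∀ d ∈ D, d ≤ m

/-- An ideal: a (nonempty) directed lower set. -/
def IsIdealSet {P : Type*} [Preorder P] (I : Set P) : Prop :=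
  I.Nonempty ∧ DirectedOn (· ≤ ·) I ∧ IsLowerSet I

/-- The Alexandroff topology on a poset: the open sets are the upper sets. -/
def alexTop (P : Type*) [Preorder P] : TopologicalSpace P where
  IsOpen := IsUpperSet
  isOpen_univ := isUpperSet_univ
  isOpen_inter _ _ := IsUpperSet.inter
  isOpen_sUnion _ h := isUpperSet_sUnion h

/-- The space `X_⊤` obtained from `X` by adjoining a new top point `⊤` (here `none`):
the closed sets are the closed sets of `X` together with the whole space. -/
def topTop (X : Type*) [TopologicalSpace X] : TopologicalSpace (Option X) where
  IsOpen V := V = ∅ ∨ ∃ U : Set X, IsOpen U ∧ V = insert none (some '' U)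
  isOpen_univ := by
    refine Or.inr ⟨Set.univ, isOpen_univ, ?_⟩
    ext (_ | a) <;> simp
  isOpen_inter := by
    rintro V W (rfl | ⟨U₁, hU₁, rfl⟩) hW
    · exact Or.inl (by simp)
    rcases hW with rfl | ⟨U₂, hU₂, rfl⟩
    · exact Or.inl (by simp)
    · refine Or.inr ⟨U₁ ∩ U₂, hU₁.inter hU₂, ?_⟩
      ext (_ | a) <;> simp
  isOpen_sUnion := by
    classical
    intro S hS
    by_cases h0 : ⋃₀ S = ∅
    · exact Or.inl h0
    · refine Or.inr ⟨{x : X | some x ∈ ⋃₀ S}, ?_, ?_⟩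
      · have h1 : {x : X | some x ∈ ⋃₀ S} = ⋃ V ∈ S, some ⁻¹' V := by
          ext x; simp [Set.mem_sUnion]
        rw [h1]
        refine isOpen_biUnion fun V hV => ?_
        rcases hS V hV with rfl | ⟨U, hU, rfl⟩
        · rw [Set.preimage_empty]; exact isOpen_empty
        · have h2 : (some ⁻¹' (insert none (some '' U)) : Set X) = U := by
            ext x; simp
          rw [h2]; exact hU
      · have hnone : (none : Option X) ∈ ⋃₀ S := by
          obtain ⟨v, V, hVS, hvV⟩ := Set.nonempty_iff_ne_empty.mpr h0
          rcases hS V hVS with rfl | ⟨U, hU, rfl⟩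
          · exact absurd hvV (by simp)
          · exact ⟨_, hVS, by simp⟩
        ext (_ | a)
        · simp only [Set.mem_insert_iff, true_or, iff_true]
          exact hnone
        · simp [Set.mem_sUnion]

/-- A `𝐊`-set of a space `X` (relative to a class `K` of spaces): a set whose image
under any continuous map to a `𝐊`-space has the closure of a unique point as closure. -/
def IsKSet (K : (Y : Type u) → TopologicalSpace Y → Prop)
    (X : Type u) [tX : TopologicalSpace X] (A : Set X) : Prop :=
  ∀ (Y : Type u) (tY : TopologicalSpace Y), K Y tY →
    ∀ f : X → Y, @Continuous X Y tX tY f →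
      ∃! y : Y, @closure Y tY (f '' A) = @closure Y tY {y}

/-- `𝐊(X)`: the collection of closed `𝐊`-sets of `X`. -/
def KSets (K : (Y : Type u) → TopologicalSpace Y → Prop)
    (X : Type u) [TopologicalSpace X] : Set (Set X) :=
  {A : Set X | IsClosed A ∧ IsKSet K X A}

/-- The lower Vietoris topology on a family `G` of subsets of `X`, generated by the
sets `◊U = {A ∈ G | A ∩ U ≠ ∅}` for `U` open. -/
def lowerVietoris {X : Type*} [TopologicalSpace X] (G : Set (Set X)) :
    TopologicalSpace ↥G :=
  TopologicalSpace.generateFrom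
    {S : Set ↥G | ∃ U : Set X, IsOpen U ∧ S = {A : ↥G | ((A : Set X) ∩ U).Nonempty}}

/-- A class `K` of spaces is adequate if `P_H(𝐊(X))` is a `𝐊`-space for every T0 space `X`. -/
def Adequate (K : (Y : Type u) → TopologicalSpace Y → Prop) : Prop :=
  ∀ (X : Type u) (tX : TopologicalSpace X), @T0Space X tX →
    K ↥(@KSets K X tX) (@lowerVietoris X tX (@KSets K X tX))

/-- `⟨Z, η⟩` is a `𝐊`-reflection of `X`. -/
def IsKReflection (K : (Y : Type u) → TopologicalSpace Y → Prop)
    (X : Type u) (tX : TopologicalSpace X)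
    (Z : Type u) (tZ : TopologicalSpace Z) (η : X → Z) : Prop :=
  K Z tZ ∧ @Continuous X Z tX tZ η ∧
  ∀ (Y : Type u) (tY : TopologicalSpace Y), K Y tY →
    ∀ f : X → Y, @Continuous X Y tX tY f →
      ∃! g : Z → Y, @Continuous Z Y tZ tY g ∧ g ∘ η = f

/-- The carrier of the Johnstone poset `𝕁 = ℕ × (ℕ ∪ {ω})`. -/
structure Johnstone where
  fst : ℕ
  snd : WithTop ℕ

/-- The Johnstone order: `(j, k) ≤ (m, n)` iff `j = m` and `k ≤ n`, or `n = ω` and `k ≤ m`. -/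
instance : PartialOrder Johnstone where
  le p q := (p.fst = q.fst ∧ p.snd ≤ q.snd) ∨ (q.snd = ⊤ ∧ p.snd ≤ (q.fst : WithTop ℕ))
  le_refl p := Or.inl ⟨rfl, le_rfl⟩
  le_trans p q r hpq hqr := by
    rcases hpq with ⟨h1, h2⟩ | ⟨h1, h2⟩ <;> rcases hqr with ⟨h3, h4⟩ | ⟨h3, h4⟩
    · exact Or.inl ⟨h1.trans h3, h2.trans h4⟩
    · exact Or.inr ⟨h3, h2.trans h4⟩
    · have hr : r.snd = ⊤ := top_le_iff.mp (h1 ▸ h4)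
      exact Or.inr ⟨hr, h3 ▸ h2⟩
    · rw [h1] at h4
      exact absurd h4 (by simp)
  le_antisymm p q hpq hqp := by
    obtain ⟨pf, ps⟩ := p
    obtain ⟨qf, qs⟩ := q
    rcases hpq with ⟨h1, h2⟩ | ⟨h1, h2⟩ <;> rcases hqp with ⟨h3, h4⟩ | ⟨h3, h4⟩
    · dsimp at *
      cases h1
      cases le_antisymm h2 h4
      rfl
    · dsimp at *
      rw [h3] at h2
      rw [top_le_iff.mp h2] at h4
      exact absurd h4 (by simp)
    · dsimp at *
      rw [h1] at h4
      rw [top_le_iff.mp h4] at h2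
      exact absurd h2 (by simp)
    · dsimp at *
      rw [h3] at h2
      exact absurd h2 (by simp)

/-- The class of d-spaces. -/
def dClass : (Y : Type u) → TopologicalSpace Y → Prop := fun Y tY => @DSpace Y tY

/-- The class of well-filtered spaces. -/
def wfClass : (Y : Type u) → TopologicalSpace Y → Prop := fun Y tY => @WellFiltered Y tY

/-- The class of sober spaces. -/
def soberClass : (Y : Type u) → TopologicalSpace Y → Prop := fun Y tY => @Sober Y tY

theorem scott_isClosed_Iic {P : Type*} [Preorder P] (x : P) :
    @IsClosed P (scottTop P) {p : P | p ≤ x} := by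
  refine @IsClosed.mk P (scottTop P) _ ⟨?_, ?_⟩
  · intro a b hab ha hb
    exact ha (le_trans hab hb)
  · intro D _ _ a ha hax
    by_contra hne
    apply hax
    refine ha.2 fun d hd => ?_
    by_contra hdx
    exact hne ⟨d, hd, hdx⟩

theorem scott_closed_lower {P : Type*} [Preorder P] {C : Set P}
    (hC : @IsClosed P (scottTop P) C) {a b : P} (hab : a ≤ b) (hb : b ∈ C) : a ∈ C := by
  by_contra ha
  have h : IsScottOpen Cᶜ := @IsClosed.isOpen_compl P (scottTop P) C hC
  exact h.1 hab ha hb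

theorem scott_closed_lub {P : Type*} [Preorder P] {C : Set P}
    (hC : @IsClosed P (scottTop P) C) {D : Set P} (hne : D.Nonempty)
    (hdir : DirectedOn (· ≤ ·) D) {a : P} (ha : IsLUB D a) (hD : D ⊆ C) : a ∈ C := by
  by_contra hac
  have h : IsScottOpen Cᶜ := @IsClosed.isOpen_compl P (scottTop P) C hC
  obtain ⟨d, hd, hdc⟩ := h.2 D hne hdir a ha hac
  exact hdc (hD hd)

theorem scott_closure_singleton {P : Type*} [Preorder P] (x : P) :
    @closure P (scottTop P) {x} = {p : P | p ≤ x} := by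
  letI := scottTop P
  apply Subset.antisymm
  · exact closure_minimal (by simp) (scott_isClosed_Iic x)
  · intro p hp
    exact scott_closed_lower isClosed_closure hp (subset_closure rfl)

theorem scott_specLE {P : Type*} [Preorder P] (x y : P) :
    @specLE P (scottTop P) x y ↔ x ≤ y := by
  unfold specLE
  rw [scott_closure_singleton]
  rfl

theorem scott_specLE_eq {P : Type*} [Preorder P] :
    @specLE P (scottTop P) = (· ≤ ·) := by
  funext x y
  exact propext (scott_specLE x y)

theorem scott_specLUB {P : Type*} [Preorder P] (D : Set P) (a : P) :
    @specLUB P (scottTop P) D a ↔ IsLUB D a := by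
  unfold specLUB specUB
  simp only [scott_specLE_eq]
  rfl

theorem scott_dspace {P : Type*} [PartialOrder P] (h : IsDcpo P) :
    @DSpace P (scottTop P) := by
  letI := scottTop P
  refine ⟨?_, ?_, ?_⟩
  · refine ⟨fun x y hxy => ?_⟩
    have h2 := inseparable_iff_closure_eq.1 hxy
    rw [scott_closure_singleton, scott_closure_singleton] at h2
    apply le_antisymm
    · have : x ∈ {p | p ≤ x} := le_refl x
      rw [h2] at this
      exact this
    · have : y ∈ {p | p ≤ y} := le_refl y
      rw [← h2] at this
      exact this
  · intro D hne hdir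
    rw [scott_specLE_eq] at hdir
    obtain ⟨a, ha⟩ := h D hne hdir
    exact ⟨a, (scott_specLUB D a).2 ha⟩
  · intro U hU
    have hU' : IsScottOpen U := hU
    refine ⟨fun x y hxy hx => hU'.1 ((scott_specLE x y).1 hxy) hx, ?_⟩
    intro D hne hdir a ha haU
    rw [scott_specLE_eq] at hdir
    exact hU'.2 D hne hdir a ((scott_specLUB D a).1 ha) haU

theorem dspace_point_unique {Y : Type*} [TopologicalSpace Y] (hY : DSpace Y) {a b : Y}
    (h : closure ({a} : Set Y) = closure {b}) : a = b := by
  haveI := hY.1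
  exact (inseparable_iff_closure_eq.2 h).eq

/-- The closure of a directed union of d-sets is a d-set. -/
theorem isKSet_closure_sUnion {X : Type u} [TopologicalSpace X] (D : Set (Set X))
    (hne : D.Nonempty) (hdir : DirectedOn (· ⊆ ·) D) (hD : ∀ A ∈ D, IsKSet dClass X A) :
    IsKSet dClass X (closure (⋃₀ D)) := by
  intro Y tY hY f hf
  haveI : Nonempty Y := by
    obtain ⟨A, hA⟩ := hne
    exact (hD A hA Y tY hY f hf).exists.nonempty
  choose! y hy using fun A hA => (hD A hA Y tY hY f hf).exists
  have hmem : ∀ A ∈ D, y A ∈ closure (f '' A) := fun A hA => by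
    rw [hy A hA]; exact subset_closure rfl
  have hdir' : DirectedOn specLE (y '' D) := by
    rintro _ ⟨A, hA, rfl⟩ _ ⟨B, hB, rfl⟩
    obtain ⟨C, hC, hAC, hBC⟩ := hdir A hA B hB
    refine ⟨y C, ⟨C, hC, rfl⟩, ?_, ?_⟩
    · show y A ∈ closure {y C}
      rw [← hy C hC]
      exact closure_mono (image_mono hAC) (hmem A hA)
    · show y B ∈ closure {y C}
      rw [← hy C hC]
      exact closure_mono (image_mono hBC) (hmem B hB)
  obtain ⟨a, ha⟩ := hY.2.1 _ (hne.image y) hdir'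
  refine ⟨a, ?_, ?_⟩
  · show closure (f '' closure (⋃₀ D)) = closure {a}
    apply Subset.antisymm
    · refine closure_minimal ?_ isClosed_closure
      rw [image_subset_iff]
      refine closure_minimal ?_ (isClosed_closure.preimage hf)
      rintro x ⟨A, hA, hx⟩
      have h1 : f x ∈ closure {y A} := by
        rw [← hy A hA]; exact subset_closure ⟨x, hx, rfl⟩
      have h2 : y A ∈ closure {a} := ha.1 _ ⟨A, hA, rfl⟩
      exact closure_minimal (singleton_subset_iff.2 h2) isClosed_closure h1
    · refine closure_minimal (singleton_subset_iff.2 ?_) isClosed_closure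
      by_contra hac
      obtain ⟨_, ⟨A, hA, rfl⟩, h2⟩ := (hY.2.2 _ isClosed_closure.isOpen_compl).2 _
        (hne.image y) hdir' a ha hac
      apply h2
      refine closure_mono (image_mono ?_) (hmem A hA)
      exact (subset_sUnion_of_mem hA).trans subset_closure
  · intro b hb
    refine dspace_point_unique hY (hb.symm.trans ?_)
    apply Subset.antisymm
    · refine closure_minimal ?_ isClosed_closure
      rw [image_subset_iff]
      refine closure_minimal ?_ (isClosed_closure.preimage hf)
      rintro x ⟨A, hA, hx⟩
      have h1 : f x ∈ closure {y A} := by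
        rw [← hy A hA]; exact subset_closure ⟨x, hx, rfl⟩
      have h2 : y A ∈ closure {a} := ha.1 _ ⟨A, hA, rfl⟩
      exact closure_minimal (singleton_subset_iff.2 h2) isClosed_closure h1
    · refine closure_minimal (singleton_subset_iff.2 ?_) isClosed_closure
      by_contra hac
      obtain ⟨_, ⟨A, hA, rfl⟩, h2⟩ := (hY.2.2 _ isClosed_closure.isOpen_compl).2 _
        (hne.image y) hdir' a ha hac
      apply h2
      refine closure_mono (image_mono ?_) (hmem A hA)
      exact (subset_sUnion_of_mem hA).trans subset_closure

/-- Directed suprema of closed d-sets are closures of unions. -/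
theorem kSets_lub {X : Type u} [TopologicalSpace X] (D : Set ↥(KSets dClass X))
    (hne : D.Nonempty) (hdir : DirectedOn (· ≤ ·) D) :
    ∃ a : ↥(KSets dClass X), IsLUB D a ∧ (a : Set X) = closure (⋃₀ (Subtype.val '' D)) := by
  refine ⟨⟨closure (⋃₀ (Subtype.val '' D)), isClosed_closure, ?_⟩, ⟨?_, ?_⟩, rfl⟩
  · refine isKSet_closure_sUnion _ (hne.image _) ?_ ?_
    · rintro _ ⟨A, hA, rfl⟩ _ ⟨B, hB, rfl⟩
      obtain ⟨C, hC, h1, h2⟩ := hdir A hA B hB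
      exact ⟨C, ⟨C, hC, rfl⟩, h1, h2⟩
    · rintro _ ⟨A, hA, rfl⟩
      exact A.2.2
  · intro A hA
    exact (subset_sUnion_of_mem (mem_image_of_mem _ hA)).trans subset_closure
  · intro B hB
    refine closure_minimal ?_ B.2.1
    rintro x ⟨_, ⟨A, hA, rfl⟩, hx⟩
    exact hB hA hx

theorem kSets_diamond {X : Type u} [TopologicalSpace X] (U : Set X) (hU : IsOpen U) :
    IsScottOpen {A : ↥(KSets dClass X) | ((A : Set X) ∩ U).Nonempty} := by
  refine ⟨fun A B hAB h => h.mono (inter_subset_inter_left _ hAB), ?_⟩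
  intro D hne hdir a ha haU
  obtain ⟨b, hb, hbe⟩ := kSets_lub D hne hdir
  obtain rfl := ha.unique hb
  obtain ⟨x, hx, hxU⟩ := haU
  rw [hbe] at hx
  obtain ⟨z, hzU, _, ⟨A, hA, rfl⟩, hz⟩ := mem_closure_iff.1 hx U hU hxU
  exact ⟨A, hA, z, hz, hzU⟩

/-- For any poset `P`, `𝐝(Σ P)` is a dcpo and `⟨Σ 𝐝(Σ P), η⟩` with
`η x = ↓x` is a d-reflection of `Σ P`. -/
theorem stmt11 (P : Type u) [PartialOrder P] :
    IsDcpo ↥(@KSets dClass P (scottTop P)) ∧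
    (∀ x : P, {p : P | p ≤ x} ∈ @KSets dClass P (scottTop P)) ∧
    ∀ η : P → ↥(@KSets dClass P (scottTop P)),
      (∀ x : P, (η x : Set P) = {p : P | p ≤ x}) →
      IsKReflection dClass P (scottTop P) ↥(@KSets dClass P (scottTop P))
        (scottTop ↥(@KSets dClass P (scottTop P))) η := by
  have hdc : IsDcpo ↥(@KSets dClass P (scottTop P)) := by
    letI := scottTop P
    intro D hne hdir
    obtain ⟨a, ha, _⟩ := kSets_lub D hne hdir
    exact ⟨a, ha⟩
  letI tP := scottTop P
  letI tZ := scottTop ↥(@KSets dClass P (scottTop P))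
  have hcl : ∀ (Y : Type u) [TopologicalSpace Y] (f : P → Y), Continuous f → ∀ x,
      closure (f '' {p : P | p ≤ x}) = closure {f x} := by
    intro Y _ f hf x
    rw [← scott_closure_singleton, closure_image_closure hf, image_singleton]
  refine ⟨hdc, ?_, ?_⟩
  · intro x
    refine ⟨scott_isClosed_Iic x, ?_⟩
    intro Y tY hY f hf
    refine ⟨f x, hcl Y f hf x, fun b hb => ?_⟩
    exact dspace_point_unique hY (hb.symm.trans (hcl Y f hf x))
  intro η hη
  have hZ : DSpace ↥(@KSets dClass P (scottTop P)) := scott_dspace hdc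
  have hmono : Monotone η := by
    intro a b hab
    show (η a : Set P) ⊆ η b
    rw [hη, hη]
    exact fun p hp => le_trans hp hab
  have hηc : Continuous η := by
    refine continuous_def.2 fun U hU => ?_
    have hU' : IsScottOpen U := hU
    show IsScottOpen _
    refine ⟨fun a b hab ha => hU'.1 (hmono hab) ha, ?_⟩
    intro D hne hdir a ha haU
    have hlub : IsLUB (η '' D) (η a) := by
      refine ⟨?_, ?_⟩
      · rintro _ ⟨d, hd, rfl⟩
        exact hmono (ha.1 hd)
      · intro B hB
        have haB : a ∈ (B : Set P) := by
          refine scott_closed_lub B.2.1 hne hdir ha fun d hd => ?_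
          have h1 : (η d : Set P) ⊆ B := hB ⟨d, hd, rfl⟩
          rw [hη] at h1
          exact h1 (le_refl d)
        show (η a : Set P) ⊆ B
        rw [hη]
        exact fun p hp => scott_closed_lower B.2.1 hp haB
    have hdir' : DirectedOn (· ≤ ·) (η '' D) := by
      rintro _ ⟨A, hA, rfl⟩ _ ⟨B, hB, rfl⟩
      obtain ⟨C, hC, h1, h2⟩ := hdir A hA B hB
      exact ⟨η C, ⟨C, hC, rfl⟩, hmono h1, hmono h2⟩
    obtain ⟨_, ⟨d, hd, rfl⟩, hdU⟩ := hU'.2 _ (hne.image η) hdir' _ hlub haU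
    exact ⟨d, hd, hdU⟩
  refine ⟨hZ, hηc, ?_⟩
  intro Y tY hY f hf
  choose g hg using fun A : ↥(@KSets dClass P (scottTop P)) => (A.2.2 Y tY hY f hf).exists
  refine ⟨g, ⟨?_, ?_⟩, ?_⟩
  · refine continuous_def.2 fun V hV => ?_
    have : g ⁻¹' V = {A : ↥(@KSets dClass P (scottTop P)) | ((A : Set P) ∩ f ⁻¹' V).Nonempty} := by
      ext A
      constructor
      · intro hA
        have h1 : g A ∈ closure (f '' (A : Set P)) := by
          rw [hg]; exact subset_closure rfl
        obtain ⟨_, hzV, z, hz, rfl⟩ := mem_closure_iff.1 h1 V hV hA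
        exact ⟨z, hz, hzV⟩
      · rintro ⟨z, hz, hzV⟩
        have h1 : f z ∈ closure {g A} := by
          rw [← hg]; exact subset_closure ⟨z, hz, rfl⟩
        obtain ⟨w, hwV, hw⟩ := mem_closure_iff.1 h1 V hV hzV
        rw [mem_singleton_iff] at hw
        subst hw
        exact hwV
    rw [this]
    exact kSets_diamond _ (hV.preimage hf)
  · funext x
    refine dspace_point_unique hY ?_
    show closure {g (η x)} = _
    rw [← hg, hη]
    exact hcl Y f hf x
  · rintro k ⟨hk, hkf⟩
    funext A
    refine dspace_point_unique hY ?_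
    rw [← hg]
    have key : closure (η '' (A : Set P)) = closure {A} := by
      obtain ⟨B, hB⟩ := (A.2.2 _ tZ hZ η hηc).exists
      have hBA : B ≤ A := by
        have h1 : B ∈ closure (η '' (A : Set P)) := by
          rw [hB]; exact subset_closure rfl
        refine closure_minimal ?_ (scott_isClosed_Iic A) h1
        rintro _ ⟨a, ha, rfl⟩
        show (η a : Set P) ⊆ A
        rw [hη]
        exact fun p hp => scott_closed_lower A.2.1 hp ha
      have hAB : A ≤ B := by
        intro a ha
        have h1 : η a ∈ closure {B} := by
          rw [← hB]; exact subset_closure ⟨a, ha, rfl⟩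
        rw [scott_closure_singleton] at h1
        have h2 : (η a : Set P) ⊆ B := h1
        rw [hη] at h2
        exact h2 (le_refl a)
      obtain rfl := le_antisymm hAB hBA
      exact hB
    rw [← hkf, image_comp, ← closure_image_closure hk, key, closure_image_closure hk,
      image_singleton]
end

section
/- Let 𝐊 be a class of T0 topological spaces such that: every sober space is a 𝐊-space; any space homeomorphic to a 𝐊-space is a 𝐊-space; every 𝐊-space is a d-space; and 𝐊 is adequate. Let P be a poset such that the irreducible closed subsets of Σ P are exactly the sets ↓x for x ∈ P together with P itself, and such that Σ P is not a 𝐊-space. Then the following are equivalent: (1) Σ P_⊤ is a 𝐊-space, where P_⊤ is P with a new largest element ⊤ adjoined; (2) the 𝐊-reflection of Σ P exists and is a Scott space, i.e. there exist a poset Q and a continuous map ξ : Σ P → Σ Q such that Σ Q is a 𝐊-space and ⟨Σ Q, ξ⟩ is a 𝐊-reflection of Σ P. Moreover, when (1) holds, Σ P_⊤ with the inclusion map i : Σ P → Σ P_⊤, i(x) = x, is a 𝐊-reflection of Σ P. -/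
universe u v

open Set

theorem sober_of_finite (Y : Type u) [TopologicalSpace Y] [Finite Y] [T0Space Y] : Sober Y := by
  classical
  rintro A ⟨hne, hcl, hA⟩
  have hirr : IsIrreducible A := by
    refine ⟨hne, ?_⟩
    rw [isPreirreducible_iff_isClosed_union_isClosed]
    exact fun z₁ z₂ h1 h2 h => hA z₁ z₂ h1 h2 h
  rw [isIrreducible_iff_sUnion_isClosed] at hirr
  have hfin : ((fun a : Y => closure ({a} : Set Y)) '' A).Finite := Set.toFinite _
  obtain ⟨z, hz, hAz⟩ := hirr hfin.toFinset (by
    intro z hz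
    rw [Set.Finite.mem_toFinset] at hz
    obtain ⟨a, _, rfl⟩ := hz
    exact isClosed_closure) (by
    intro a ha
    refine ⟨closure {a}, ?_, subset_closure rfl⟩
    rw [Set.Finite.coe_toFinset]
    exact ⟨a, ha, rfl⟩)
  rw [Set.Finite.mem_toFinset] at hz
  obtain ⟨a, ha, rfl⟩ := hz
  have hEq : A = closure {a} :=
    Set.Subset.antisymm hAz (closure_minimal (Set.singleton_subset_iff.mpr ha) hcl)
  refine ⟨a, hEq, fun b hb => ?_⟩
  have : closure ({b} : Set Y) = closure {a} := hb.symm.trans hEq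
  exact (inseparable_iff_closure_eq.mpr this).eq

theorem mem_open_of_closure_eq {Y : Type*} [TopologicalSpace Y] {B : Set Y} {y : Y}
    (h : closure B = closure {y}) {V : Set Y} (hV : IsOpen V) : y ∈ V ↔ (B ∩ V).Nonempty := by
  constructor
  · intro hy
    have : y ∈ closure B := h ▸ subset_closure rfl
    obtain ⟨z, hz1, hz2⟩ := mem_closure_iff.mp this V hV hy
    exact ⟨z, hz2, hz1⟩
  · rintro ⟨z, hz1, hz2⟩
    have : z ∈ closure {y} := h ▸ subset_closure hz1
    obtain ⟨w, hw1, hw2⟩ := mem_closure_iff.mp this V hV hz2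
    cases hw2
    exact hw1

section refl
variable (K : (Y : Type u) → TopologicalSpace Y → Prop)

theorem kset_irred
    (hSober : ∀ (Y : Type u) (tY : TopologicalSpace Y), @Sober Y tY → K Y tY)
    (X : Type u) [TopologicalSpace X] (A : Set X) (hA : IsKSet K X A) :
    A.Nonempty ∧ ∀ U V : Set X, IsOpen U → IsOpen V → (A ∩ U).Nonempty → (A ∩ V).Nonempty →
      (A ∩ (U ∩ V)).Nonempty := by
  classical
  have hK : K (ULift.{u} (Prop × Prop)) inferInstance := hSober _ _ (sober_of_finite _)
  have hmain : ∀ U V : Set X, IsOpen U → IsOpen V →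
      ∃ y : ULift.{u} (Prop × Prop), ∀ W : Set (Prop × Prop), IsOpen W →
        (y.down ∈ W ↔ ∃ a ∈ A, ((a ∈ U), (a ∈ V)) ∈ W) := by
    intro U V hU hV
    have hf : Continuous (fun x : X => (ULift.up ((x ∈ U), (x ∈ V)) : ULift.{u} (Prop × Prop))) := by
      refine continuous_uliftUp.comp ?_
      exact Continuous.prodMk (continuous_Prop.mpr hU) (continuous_Prop.mpr hV)
    obtain ⟨y, hy, -⟩ := hA _ _ hK _ hf
    refine ⟨y, fun W hW => ?_⟩
    have := mem_open_of_closure_eq hy (hW.preimage continuous_uliftDown)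
    rw [Set.mem_preimage] at this
    rw [this]
    constructor
    · rintro ⟨_, ⟨a, ha, rfl⟩, h⟩
      exact ⟨a, ha, h⟩
    · rintro ⟨a, ha, h⟩
      exact ⟨_, ⟨a, ha, rfl⟩, h⟩
  constructor
  · obtain ⟨y, hy⟩ := hmain univ univ isOpen_univ isOpen_univ
    obtain ⟨a, ha, -⟩ := (hy univ isOpen_univ).1 trivial
    exact ⟨a, ha⟩
  · rintro U V hU hV ⟨a, ha, haU⟩ ⟨b, hb, hbV⟩
    obtain ⟨y, hy⟩ := hmain U V hU hV
    have h1 : IsOpen {p : Prop × Prop | p.1} := continuous_Prop.mp continuous_fst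
    have h2 : IsOpen {p : Prop × Prop | p.2} := continuous_Prop.mp continuous_snd
    have y1 := (hy _ h1).2 ⟨a, ha, haU⟩
    have y2 := (hy _ h2).2 ⟨b, hb, hbV⟩
    obtain ⟨c, hc, hc1, hc2⟩ := (hy _ (h1.inter h2)).1 ⟨y1, y2⟩
    exact ⟨c, hc, hc1, hc2⟩

theorem closure_isKSet (hT0 : ∀ (Y : Type u) (tY : TopologicalSpace Y), K Y tY → @T0Space Y tY)
    (X : Type u) [TopologicalSpace X] (x : X) : closure ({x} : Set X) ∈ KSets K X := by
  refine ⟨isClosed_closure, ?_⟩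
  intro Y tY hY f hf
  have := hT0 Y tY hY
  have h : closure (f '' closure {x}) = closure {f x} := by
    rw [closure_image_closure hf, Set.image_singleton]
  refine ⟨f x, h, fun y hy => ?_⟩
  exact (inseparable_iff_closure_eq.mpr (hy.symm.trans h)).eq

/-- The unit of the reflection. -/
def etaK (hT0 : ∀ (Y : Type u) (tY : TopologicalSpace Y), K Y tY → @T0Space Y tY)
    (X : Type u) [TopologicalSpace X] (x : X) : ↥(KSets K X) :=
  ⟨closure {x}, closure_isKSet K hT0 X x⟩

theorem closure_inter_open {X : Type*} [TopologicalSpace X] (x : X) {U : Set X} (hU : IsOpen U) :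
    (closure {x} ∩ U).Nonempty ↔ x ∈ U := by
  have := @mem_open_of_closure_eq X _ (closure {x}) x closure_closure U hU
  exact this.symm

theorem open_eq_diamond
    (hT0 : ∀ (Y : Type u) (tY : TopologicalSpace Y), K Y tY → @T0Space Y tY)
    (hSober : ∀ (Y : Type u) (tY : TopologicalSpace Y), @Sober Y tY → K Y tY)
    (X : Type u) [TopologicalSpace X] (O : Set ↥(KSets K X))
    (hO : @IsOpen _ (lowerVietoris (KSets K X)) O) :
    IsOpen (etaK K hT0 X ⁻¹' O) ∧
      O = {A : ↥(KSets K X) | ((A : Set X) ∩ (etaK K hT0 X ⁻¹' O)).Nonempty} := by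
  induction hO with
  | basic s hs =>
    obtain ⟨U, hU, rfl⟩ := hs
    have : etaK K hT0 X ⁻¹' {A : ↥(KSets K X) | ((A : Set X) ∩ U).Nonempty} = U := by
      ext x
      exact closure_inter_open x hU
    rw [this]
    exact ⟨hU, rfl⟩
  | univ =>
    refine ⟨isOpen_univ, ?_⟩
    ext A
    have := (kset_irred K hSober X A.1 A.2.2).1
    simpa using this
  | inter s t _ _ hs ht =>
    refine ⟨hs.1.inter ht.1, ?_⟩
    ext A
    have := (kset_irred K hSober X A.1 A.2.2).2 _ _ hs.1 ht.1
    constructor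
    · rintro ⟨h1, h2⟩
      rw [hs.2] at h1
      rw [ht.2] at h2
      exact this h1 h2
    · rintro ⟨x, hx, hx1, hx2⟩
      constructor
      · rw [hs.2]; exact ⟨x, hx, hx1⟩
      · rw [ht.2]; exact ⟨x, hx, hx2⟩
  | sUnion S _ ih =>
    constructor
    · rw [Set.preimage_sUnion]
      exact isOpen_biUnion fun t ht => (ih t ht).1
    · ext A
      constructor
      · rintro ⟨t, ht, hA⟩
        rw [(ih t ht).2] at hA
        obtain ⟨x, hx, hx2⟩ := hA
        exact ⟨x, hx, t, ht, hx2⟩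
      · rintro ⟨x, hx, t, ht, hx2⟩
        refine ⟨t, ht, ?_⟩
        rw [(ih t ht).2]
        exact ⟨x, hx, hx2⟩

theorem diamond_open (X : Type u) [TopologicalSpace X] {U : Set X} (hU : IsOpen U) :
    @IsOpen _ (lowerVietoris (KSets K X)) {A : ↥(KSets K X) | ((A : Set X) ∩ U).Nonempty} :=
  TopologicalSpace.GenerateOpen.basic _ ⟨U, hU, rfl⟩

theorem adequate_refl
    (hT0 : ∀ (Y : Type u) (tY : TopologicalSpace Y), K Y tY → @T0Space Y tY)
    (hSober : ∀ (Y : Type u) (tY : TopologicalSpace Y), @Sober Y tY → K Y tY)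
    (hAdeq : Adequate K) (X : Type u) [tX : TopologicalSpace X] [T0Space X] :
    IsKReflection K X tX ↥(KSets K X) (lowerVietoris (KSets K X)) (etaK K hT0 X) := by
  letI tR : TopologicalSpace ↥(KSets K X) := lowerVietoris (KSets K X)
  refine ⟨hAdeq X tX inferInstance,
    ⟨fun O hO => (open_eq_diamond K hT0 hSober X O hO).1⟩, ?_⟩
  intro Y tY hY f hf
  have := hT0 Y tY hY
  choose g hg hguniq using fun A : ↥(KSets K X) => A.2.2 Y tY hY f hf
  refine ⟨g, ⟨⟨fun V hV => ?_⟩, ?_⟩, ?_⟩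
  · have : g ⁻¹' V = {A : ↥(KSets K X) | ((A : Set X) ∩ f ⁻¹' V).Nonempty} := by
      ext A
      rw [Set.mem_preimage, mem_open_of_closure_eq (hg A) hV, Set.image_inter_nonempty_iff]
      rfl
    rw [this]
    exact diamond_open K X (hV.preimage hf)
  · funext x
    refine (hguniq (etaK K hT0 X x) (f x) ?_).symm
    change closure (f '' closure {x}) = _
    rw [closure_image_closure hf, Set.image_singleton]
  · rintro g' ⟨hg', hgf⟩
    funext A
    have hins : Inseparable (g' A) (g A) := by
      rw [inseparable_iff_forall_isOpen]
      intro V hV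
      rw [mem_open_of_closure_eq (hg A) hV, Set.image_inter_nonempty_iff, ← hgf]
      have := (open_eq_diamond K hT0 hSober X _ (hV.preimage hg')).2
      constructor
      · intro h
        have h' : A ∈ g' ⁻¹' V := h
        rw [this] at h'
        exact h'
      · intro h
        change A ∈ g' ⁻¹' V
        rw [this]
        exact h
    exact hins.eq

theorem refl_unique (X : Type u) (tX : TopologicalSpace X)
    (Z : Type u) (tZ : TopologicalSpace Z) (η : X → Z)
    (W : Type u) (tW : TopologicalSpace W) (ξ : X → W)
    (hZ : IsKReflection K X tX Z tZ η) (hW : IsKReflection K X tX W tW ξ) :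
    Nonempty (Z ≃ₜ W) := by
  obtain ⟨a, ⟨ha, ha'⟩, -⟩ := hZ.2.2 W tW hW.1 ξ hW.2.1
  obtain ⟨b, ⟨hb, hb'⟩, -⟩ := hW.2.2 Z tZ hZ.1 η hZ.2.1
  have h1 : b ∘ a = id := (hZ.2.2 Z tZ hZ.1 η hZ.2.1).unique
    ⟨hb.comp ha, by rw [Function.comp_assoc, ha', hb']⟩ ⟨continuous_id, rfl⟩
  have h2 : a ∘ b = id := (hW.2.2 W tW hW.1 ξ hW.2.1).unique
    ⟨ha.comp hb, by rw [Function.comp_assoc, hb', ha']⟩ ⟨continuous_id, rfl⟩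
  exact ⟨{ toFun := a, invFun := b, left_inv := congrFun h1, right_inv := congrFun h2,
           continuous_toFun := ha, continuous_invFun := hb }⟩

end refl

theorem scott_closure (P : Type*) [PartialOrder P] (x : P) :
    @closure P (scottTop P) {x} = {p | p ≤ x} := by
  letI := scottTop P
  apply Set.Subset.antisymm
  · refine closure_minimal (by simp) ⟨?_⟩
    change IsScottOpen _
    constructor
    · intro a b hab ha hb
      exact ha (le_trans hab hb)
    · intro D _ _ a ha hax
      by_contra hcon
      refine hax (ha.2 fun d hd => ?_)
      by_contra hdx
      exact hcon ⟨d, hd, hdx⟩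
  · intro p hp
    rw [mem_closure_iff]
    intro U hU hpU
    have hU' : IsScottOpen U := hU
    exact ⟨x, hU'.1 hp hpU, rfl⟩

theorem scott_T0 (P : Type*) [PartialOrder P] : @T0Space P (scottTop P) := by
  letI := scottTop P
  refine ⟨fun x y h => ?_⟩
  have h' := inseparable_iff_closure_eq.mp h
  rw [scott_closure, scott_closure] at h'
  exact le_antisymm (h'.subset (le_refl x : x ∈ {p | p ≤ x}))
    (h'.symm.subset (le_refl y : y ∈ {p | p ≤ y}))

theorem scott_orderIso_continuous {P Q : Type*} [PartialOrder P] [PartialOrder Q] (e : P ≃o Q) :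
    @Continuous P Q (scottTop P) (scottTop Q) e := by
  letI := scottTop P
  letI := scottTop Q
  refine ⟨fun U hU => ?_⟩
  have hU' : IsScottOpen U := hU
  change IsScottOpen _
  refine ⟨fun a b hab ha => hU'.1 (e.monotone hab) ha, fun D hne hdir a ha haU => ?_⟩
  have hdir2 : DirectedOn (· ≤ ·) (e '' D) := by
    rintro _ ⟨x, hx, rfl⟩ _ ⟨y, hy, rfl⟩
    obtain ⟨z, hz, hxz, hyz⟩ := hdir x hx y hy
    exact ⟨e z, ⟨z, hz, rfl⟩, e.monotone hxz, e.monotone hyz⟩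
  obtain ⟨_, ⟨d, hd, rfl⟩, hdU⟩ := hU'.2 (e '' D) (hne.image _) hdir2 (e a)
    ((OrderIso.isLUB_image' e).mpr ha) haU
  exact ⟨d, hd, hdU⟩

theorem isLUB_coe_withTop {P : Type*} [PartialOrder P] {D : Set P} (hne : D.Nonempty) {a : P} :
    IsLUB ((fun x : P => (x : WithTop P)) '' D) (a : WithTop P) ↔ IsLUB D a := by
  constructor
  · intro h
    refine ⟨fun d hd => WithTop.coe_le_coe.mp (h.1 ⟨d, hd, rfl⟩), fun b hb => ?_⟩
    refine WithTop.coe_le_coe.mp (h.2 ?_)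
    rintro _ ⟨d, hd, rfl⟩
    exact WithTop.coe_le_coe.mpr (hb hd)
  · intro h
    constructor
    · rintro _ ⟨d, hd, rfl⟩
      exact WithTop.coe_le_coe.mpr (h.1 hd)
    · intro b hb
      induction b with
      | top => exact le_top
      | coe b =>
        exact WithTop.coe_le_coe.mpr (h.2 fun d hd => WithTop.coe_le_coe.mp (hb ⟨d, hd, rfl⟩))

theorem coe_continuous (P : Type*) [PartialOrder P] :
    @Continuous P (WithTop P) (scottTop P) (scottTop (WithTop P)) (fun x => (x : WithTop P)) := by
  letI := scottTop P
  letI := scottTop (WithTop P)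
  refine ⟨fun U hU => ?_⟩
  have hU' : IsScottOpen U := hU
  change IsScottOpen _
  refine ⟨fun a b hab ha => hU'.1 (WithTop.coe_le_coe.mpr hab) ha, fun D hne hdir a ha haU => ?_⟩
  have hdir2 : DirectedOn (· ≤ ·) ((fun x : P => (x : WithTop P)) '' D) := by
    rintro _ ⟨x, hx, rfl⟩ _ ⟨y, hy, rfl⟩
    obtain ⟨z, hz, hxz, hyz⟩ := hdir x hx y hy
    exact ⟨z, ⟨z, hz, rfl⟩, WithTop.coe_le_coe.mpr hxz, WithTop.coe_le_coe.mpr hyz⟩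
  obtain ⟨_, ⟨d, hd, rfl⟩, hdU⟩ := hU'.2 _ (hne.image _) hdir2 _
    ((isLUB_coe_withTop hne).mpr ha) haU
  exact ⟨d, hd, hdU⟩

/-- The closure of a directed set is irreducible. -/
theorem directed_irred (P : Type*) [PartialOrder P] (D : Set P) (hne : D.Nonempty)
    (hdir : DirectedOn (· ≤ ·) D) : @IrredClosed P (scottTop P) (@closure P (scottTop P) D) := by
  letI := scottTop P
  refine ⟨hne.mono subset_closure, isClosed_closure, fun F₁ F₂ h1 h2 h => ?_⟩
  by_contra hcon
  push Not at hcon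
  obtain ⟨hn1, hn2⟩ := hcon
  have hd1 : ∃ d ∈ D, d ∉ F₁ := by
    by_contra hc
    push Not at hc
    exact hn1 (closure_minimal hc h1)
  have hd2 : ∃ d ∈ D, d ∉ F₂ := by
    by_contra hc
    push Not at hc
    exact hn2 (closure_minimal hc h2)
  obtain ⟨d, hd, hdF⟩ := hd1
  obtain ⟨e, he, heF⟩ := hd2
  obtain ⟨c, hc, hdc, hec⟩ := hdir d hd e he
  have o1 : IsScottOpen F₁ᶜ := h1.isOpen_compl
  have o2 : IsScottOpen F₂ᶜ := h2.isOpen_compl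
  rcases h (subset_closure hc) with h' | h'
  · exact o1.1 hdc hdF h'
  · exact o2.1 hec heF h'

/-- A nonempty Scott open set of `P`, with the top adjoined, is Scott open. -/
theorem insert_top_open (P : Type*) [PartialOrder P]
    (hirr : ∀ A : Set P, @IrredClosed P (scottTop P) A ↔
      ((∃ x : P, A = {p : P | p ≤ x}) ∨ A = Set.univ))
    (V : Set (WithTop P)) (hV : IsScottOpen ((fun x : P => (x : WithTop P)) ⁻¹' V))
    (hne : ((fun x : P => (x : WithTop P)) ⁻¹' V).Nonempty) (htop : ⊤ ∈ V) : IsScottOpen V := by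
  letI := scottTop P
  refine ⟨?_, ?_⟩
  · intro a b hab ha
    induction b with
    | top => exact htop
    | coe b =>
      induction a with
      | top => simp at hab
      | coe a => exact hV.1 (WithTop.coe_le_coe.mp hab) ha
  · intro E hEne hEdir a ha haV
    by_cases hE : (⊤ : WithTop P) ∈ E
    · exact ⟨⊤, hE, htop⟩
    · obtain ⟨D, rfl⟩ : ∃ D : Set P, E = (fun x : P => (x : WithTop P)) '' D := by
        refine ⟨(fun x : P => (x : WithTop P)) ⁻¹' E, ?_⟩
        ext z
        constructor
        · intro hz
          induction z with
          | top => exact absurd hz hE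
          | coe z => exact ⟨z, hz, rfl⟩
        · rintro ⟨z, hz, rfl⟩
          exact hz
      have hDne : D.Nonempty := Set.image_nonempty.mp hEne
      have hDdir : DirectedOn (· ≤ ·) D := by
        intro x hx y hy
        obtain ⟨_, ⟨z, hz, rfl⟩, hxz, hyz⟩ := hEdir _ ⟨x, hx, rfl⟩ _ ⟨y, hy, rfl⟩
        exact ⟨z, hz, WithTop.coe_le_coe.mp hxz, WithTop.coe_le_coe.mp hyz⟩
      suffices h : (D ∩ (fun x : P => (x : WithTop P)) ⁻¹' V).Nonempty by
        obtain ⟨d, hd, hdV⟩ := h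
        exact ⟨d, ⟨d, hd, rfl⟩, hdV⟩
      induction a with
      | coe a => exact hV.2 D hDne hDdir a ((isLUB_coe_withTop hDne).mp ha) haV
      | top =>
        rcases (hirr _).mp (directed_irred P D hDne hDdir) with ⟨x, hx⟩ | hu
        · exfalso
          have hle : (⊤ : WithTop P) ≤ (x : WithTop P) := by
            refine ha.2 ?_
            rintro _ ⟨d, hd, rfl⟩
            have : d ∈ closure D := subset_closure hd
            rw [hx] at this
            exact WithTop.coe_le_coe.mpr this
          simp at hle
        · obtain ⟨v, hv⟩ := hne
          have hvD : v ∈ closure D := hu ▸ trivial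
          obtain ⟨d, hd1, hd2⟩ := mem_closure_iff.mp hvD _ hV hv
          exact ⟨d, hd2, hd1⟩

/-- Let `P` be a poset whose irreducible Scott-closed sets are exactly the
sets `↓x` together with `P` itself, and such that `Σ P` is not a `𝐊`-space. Then `Σ P_⊤`
is a `𝐊`-space iff the `𝐊`-reflection of `Σ P` exists and is a Scott space; in which case
`Σ P_⊤` with the inclusion is a `𝐊`-reflection of `Σ P`. -/
theorem stmt13
    (K : (Y : Type u) → TopologicalSpace Y → Prop)
    (hT0 : ∀ (Y : Type u) (tY : TopologicalSpace Y), K Y tY → @T0Space Y tY)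
    (hSober : ∀ (Y : Type u) (tY : TopologicalSpace Y), @Sober Y tY → K Y tY)
    (hHomeo : ∀ (Y : Type u) (tY : TopologicalSpace Y) (Z : Type u) (tZ : TopologicalSpace Z),
      K Y tY → Nonempty (@Homeomorph Y Z tY tZ) → K Z tZ)
    (hD : ∀ (Y : Type u) (tY : TopologicalSpace Y), K Y tY → @DSpace Y tY)
    (hAdeq : Adequate K)
    (P : Type u) [PartialOrder P]
    (hirr : ∀ A : Set P, @IrredClosed P (scottTop P) A ↔
      ((∃ x : P, A = {p : P | p ≤ x}) ∨ A = Set.univ))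
    (hnotK : ¬ K P (scottTop P)) :
    (K (WithTop P) (scottTop (WithTop P)) ↔
      ∃ (Q : Type u) (pQ : PartialOrder Q) (ξ : P → Q),
        IsKReflection K P (scottTop P) Q (@scottTop Q pQ.toPreorder) ξ) ∧
    (K (WithTop P) (scottTop (WithTop P)) →
      IsKReflection K P (scottTop P) (WithTop P) (scottTop (WithTop P))
        (fun x : P => (x : WithTop P))) := by
  letI tP : TopologicalSpace P := scottTop P
  letI tR : TopologicalSpace ↥(KSets K P) := lowerVietoris (KSets K P)
  haveI : T0Space P := scott_T0 P
  have hnotop : ∀ x : P, {p : P | p ≤ x} ≠ Set.univ := by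
    intro x hx
    apply hnotK
    apply hSober
    intro A hA
    have hex : ∃ y : P, A = closure {y} := by
      rcases (hirr A).mp hA with ⟨y, hy⟩ | hu
      · exact ⟨y, by rw [hy, scott_closure]⟩
      · exact ⟨x, by rw [hu, scott_closure, hx]⟩
    obtain ⟨y, hy⟩ := hex
    exact ⟨y, hy, fun z hz => (inseparable_iff_closure_eq.mpr (hz.symm.trans hy)).eq⟩
  have hRefl := adequate_refl K hT0 hSober hAdeq P
  have hmemK : ∀ A : Set P, A ∈ KSets K P → (∃ x : P, A = {p : P | p ≤ x}) ∨ A = Set.univ := by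
    intro A hA
    refine (hirr A).mp ?_
    obtain ⟨hne, hi⟩ := kset_irred K hSober P A hA.2
    refine ⟨hne, hA.1, fun F₁ F₂ h1 h2 h => ?_⟩
    by_contra hcon
    push Not at hcon
    obtain ⟨hn1, hn2⟩ := hcon
    obtain ⟨a, ha, haF⟩ := Set.not_subset.mp hn1
    obtain ⟨b, hb, hbF⟩ := Set.not_subset.mp hn2
    obtain ⟨c, hc, hc1, hc2⟩ := hi _ _ h1.isOpen_compl h2.isOpen_compl ⟨a, ha, haF⟩ ⟨b, hb, hbF⟩
    rcases h hc with h' | h'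
    · exact hc1 h'
    · exact hc2 h'
  have hunivK : (Set.univ : Set P) ∈ KSets K P := by
    by_contra hcon
    apply hnotK
    refine hHomeo _ _ _ _ hRefl.1 ?_
    have hinj : Function.Injective (etaK K hT0 P) := by
      intro x y hxy
      have : closure ({x} : Set P) = closure {y} := congrArg Subtype.val hxy
      exact (inseparable_iff_closure_eq.mpr this).eq
    have hsurj : Function.Surjective (etaK K hT0 P) := by
      rintro ⟨A, hA⟩
      rcases hmemK A hA with ⟨x, hx⟩ | hu
      · exact ⟨x, Subtype.ext ((scott_closure P x).trans hx.symm)⟩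
      · exact absurd (hu ▸ hA) hcon
    have hopen : IsOpenMap (etaK K hT0 P) := by
      intro U hU
      have : etaK K hT0 P '' U = {A : ↥(KSets K P) | ((A : Set P) ∩ U).Nonempty} := by
        ext A
        obtain ⟨x, rfl⟩ := hsurj A
        rw [hinj.mem_set_image]
        exact (closure_inter_open x hU).symm
      rw [this]
      exact diamond_open K P hU
    exact ⟨((Equiv.ofBijective _ ⟨hinj, hsurj⟩).toHomeomorphOfContinuousOpen
      hRefl.2.1 hopen).symm⟩
  have hmoreover : K (WithTop P) (scottTop (WithTop P)) →
      IsKReflection K P (scottTop P) (WithTop P) (scottTop (WithTop P))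
        (fun x : P => (x : WithTop P)) := by
    intro hK
    letI tT : TopologicalSpace (WithTop P) := scottTop (WithTop P)
    have htopcl : closure ((fun x : P => (x : WithTop P)) '' univ) = closure {(⊤ : WithTop P)} := by
      obtain ⟨y, hy, -⟩ := hunivK.2 _ _ hK _ (coe_continuous P)
      rw [hy]
      induction y with
      | top => rfl
      | coe y =>
        exfalso
        apply hnotop y
        ext p
        simp only [Set.mem_setOf_eq, Set.mem_univ, iff_true]
        have : (p : WithTop P) ∈ closure ((fun x : P => (x : WithTop P)) '' univ) :=
          subset_closure ⟨p, trivial, rfl⟩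
        rw [hy, scott_closure] at this
        exact WithTop.coe_le_coe.mp this
    refine ⟨hK, coe_continuous P, ?_⟩
    intro Y tY hY f hf
    haveI := hT0 Y tY hY
    obtain ⟨y, hy, -⟩ := hunivK.2 Y tY hY f hf
    let g : WithTop P → Y := fun z => WithTop.recTopCoe y f z
    refine ⟨g, ⟨⟨fun V hV => ?_⟩, rfl⟩, ?_⟩
    · have hiff := mem_open_of_closure_eq hy hV
      by_cases hyV : y ∈ V
      · obtain ⟨_, ⟨p, -, rfl⟩, hp⟩ := hiff.mp hyV
        exact insert_top_open P hirr (g ⁻¹' V) (hV.preimage hf) ⟨p, hp⟩ hyV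
      · have : g ⁻¹' V = ∅ := by
          rw [Set.eq_empty_iff_forall_notMem]
          intro z hz
          induction z with
          | top => exact hyV hz
          | coe z => exact hyV (hiff.mpr ⟨f z, ⟨z, trivial, rfl⟩, hz⟩)
        rw [this]
        exact isOpen_empty
    · rintro g' ⟨hg', hgf⟩
      funext z
      induction z with
      | coe z => exact congrFun hgf z
      | top =>
        have : closure {g' ⊤} = closure {y} := by
          rw [← hy, ← hgf, Set.image_comp, ← closure_image_closure hg', htopcl,
            closure_image_closure hg', Set.image_singleton]
        exact (inseparable_iff_closure_eq.mpr this).eq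
  refine ⟨⟨fun h => ⟨WithTop P, inferInstance, _, hmoreover h⟩, ?_⟩, hmoreover⟩
  rintro ⟨Q, pQ, ξ, hξ⟩
  letI tQ : TopologicalSpace Q := scottTop Q
  obtain ⟨h⟩ := refl_unique K P _ _ _ _ _ _ _ hξ hRefl
  -- the specialization order of the hyperspace is inclusion
  have hspec : ∀ A B : ↥(KSets K P), A ∈ closure ({B} : Set ↥(KSets K P)) ↔ (A : Set P) ⊆ B := by
    intro A B
    constructor
    · intro hAB a ha
      by_contra haB
      obtain ⟨C, hC, hCB⟩ := mem_closure_iff.mp hAB _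
        (diamond_open K P B.2.1.isOpen_compl) ⟨a, ha, haB⟩
      cases hCB
      obtain ⟨c, hc, hc'⟩ := hC
      exact hc' hc
    · intro hAB
      rw [mem_closure_iff]
      intro O hO hAO
      refine ⟨B, ?_, rfl⟩
      have hd := (open_eq_diamond K hT0 hSober P O hO).2
      rw [hd] at hAO ⊢
      obtain ⟨x, hx, hxO⟩ := hAO
      exact ⟨x, hAB hx, hxO⟩
  have hle : ∀ q r : Q, (h q : Set P) ⊆ h r ↔ q ≤ r := by
    intro q r
    rw [← hspec, ← Set.image_singleton, ← h.image_closure, h.injective.mem_set_image,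
      scott_closure]
    rfl
  have hdown : ∀ x : P, {p : P | p ≤ x} ∈ KSets K P := fun x => by
    rw [← scott_closure]
    exact closure_isKSet K hT0 P x
  let φ : WithTop P → ↥(KSets K P) := fun z =>
    WithTop.recTopCoe ⟨univ, hunivK⟩ (fun x => ⟨{p : P | p ≤ x}, hdown x⟩) z
  have hφ : ∀ z w : WithTop P, (φ z : Set P) ⊆ φ w ↔ z ≤ w := by
    intro z w
    induction w with
    | top => exact ⟨fun _ => le_top, fun _ => Set.subset_univ _⟩
    | coe w =>
      induction z with
      | top =>
        constructor
        · intro hs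
          exact absurd (Set.univ_subset_iff.mp hs) (hnotop w)
        · intro hs
          simp at hs
      | coe z =>
        rw [WithTop.coe_le_coe]
        exact ⟨fun hs => hs (le_refl z), fun hzw p hp => le_trans hp hzw⟩
  have hφsurj : Function.Surjective φ := by
    rintro ⟨A, hA⟩
    rcases hmemK A hA with ⟨x, rfl⟩ | rfl
    · exact ⟨(x : WithTop P), rfl⟩
    · exact ⟨⊤, rfl⟩
  have hψ : ∀ z w : WithTop P, h.symm (φ z) ≤ h.symm (φ w) ↔ z ≤ w := by
    intro z w
    rw [← hle, h.apply_symm_apply, h.apply_symm_apply, hφ]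
  let e : WithTop P ≃o Q := RelIso.ofSurjective
    (OrderEmbedding.ofMapLEIff (fun z => h.symm (φ z)) hψ) (h.symm.surjective.comp hφsurj)
  refine hHomeo Q tQ _ _ hξ.1 ?_
  letI tT : TopologicalSpace (WithTop P) := scottTop (WithTop P)
  exact ⟨{ toEquiv := e.symm.toEquiv
           continuous_toFun := scott_orderIso_continuous e.symm
           continuous_invFun := scott_orderIso_continuous e }⟩
end

section
/- Let X be a countably infinite set equipped with the cofinite topology (the closed sets are the finite sets and X itself). Then: (a) X is not well-filtered; (b) the sobrification of X is not a Scott space, i.e. there is no poset Q such that P_H(irr_c(X)), the set of irreducible closed subsets of X with the lower Vietoris topology, is homeomorphic to Σ Q. -/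
universe u v

open Set

/-- A countably infinite set with the cofinite topology is not
well-filtered, and its sobrification is not a Scott space. -/
theorem stmt14 (X : Type u) [tX : TopologicalSpace X] [Countable X] [Infinite X]
    (ht : ∀ U : Set X, IsOpen U ↔ U = ∅ ∨ Uᶜ.Finite) :
    ¬ WellFiltered X ∧
    ¬ ∃ (Q : Type v) (pQ : PartialOrder Q),
        Nonempty (@Homeomorph ↥{A : Set X | IrredClosed A} Q
          (lowerVietoris {A : Set X | IrredClosed A}) (@scottTop Q pQ.toPreorder)) := by
  classical
  have hcl : ∀ A : Set X, IsClosed A ↔ A = univ ∨ A.Finite := by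
    intro A
    rw [← isOpen_compl_iff, ht, compl_compl, compl_empty_iff]
  refine ⟨?_, ?_⟩
  · rintro ⟨-, hw⟩
    have key := hw {K : Set X | Kᶜ.Finite} ⟨univ, by simp⟩ ?_ ?_ ∅ isOpen_empty ?_
    · obtain ⟨K, hK, hK0⟩ := key
      have h0 : K = ∅ := subset_empty_iff.mp hK0
      subst h0
      simp only [mem_setOf_eq, compl_empty] at hK
      exact infinite_univ hK
    · intro K hK
      have hKf : Kᶜ.Finite := hK
      refine ⟨?_, ?_, {K}, ?_, by simp⟩
      · by_contra hne
        rw [not_nonempty_iff_eq_empty] at hne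
        rw [hne, compl_empty] at hKf
        exact infinite_univ hKf
      · refine isCompact_of_finite_subcover ?_
        intro ι U hU hcov
        by_cases hne : K.Nonempty
        · obtain ⟨x, hx⟩ := hne
          obtain ⟨i, hi⟩ := mem_iUnion.mp (hcov hx)
          have hfin : (U i)ᶜ.Finite := by
            rcases (ht _).mp (hU i) with h | h
            · rw [h] at hi
              exact absurd hi (by simp)
            · exact h
          have hfin2 : (K \ U i).Finite := hfin.subset (fun y hy => hy.2)
          obtain ⟨t, htc⟩ := hfin2.isCompact.elim_finite_subcover U hU
            (diff_subset.trans hcov)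
          refine ⟨insert i t, fun y hy => ?_⟩
          by_cases hyi : y ∈ U i
          · exact mem_biUnion (Finset.mem_insert_self i t) hyi
          · obtain ⟨j, hj, hyj⟩ := mem_iUnion₂.mp (htc ⟨hy, hyi⟩)
            exact mem_biUnion (Finset.mem_insert_of_mem hj) hyj
        · rw [not_nonempty_iff_eq_empty] at hne
          exact ⟨∅, by simp [hne]⟩
      · intro U hU
        rw [mem_singleton_iff] at hU
        rw [hU]
        exact (ht _).mpr (Or.inr hKf)
    · intro A hA B hB
      refine ⟨A ∩ B, ?_, inter_subset_left, inter_subset_right⟩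
      simp only [mem_setOf_eq, compl_inter] at *
      exact hA.union hB
    · intro x hx
      have := hx ({x}ᶜ) (by simp)
      exact absurd rfl this
  · rintro ⟨Q, pQ, ⟨h⟩⟩
    have huniv : IrredClosed (univ : Set X) := by
      refine ⟨univ_nonempty, isClosed_univ, fun F₁ F₂ h1 h2 hs => ?_⟩
      rcases (hcl _).mp h1 with h1 | h1
      · exact Or.inl h1.ge
      rcases (hcl _).mp h2 with h2 | h2
      · exact Or.inr h2.ge
      exact absurd ((h1.union h2).subset hs) infinite_univ
    have hsing : ∀ x : X, IrredClosed ({x} : Set X) := by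
      intro x
      refine ⟨singleton_nonempty x, (hcl _).mpr (Or.inr (finite_singleton x)), ?_⟩
      intro F₁ F₂ _ _ hs
      simpa using hs
    have hclass : ∀ A : Set X, IrredClosed A → A ≠ univ → ∃ x, A = {x} := by
      rintro A ⟨⟨x, hx⟩, hA, hirr⟩ hne
      have hfin : A.Finite := ((hcl _).mp hA).resolve_left hne
      refine ⟨x, Subset.antisymm ?_ (singleton_subset_iff.mpr hx)⟩
      rcases hirr {x} (A \ {x}) ((hcl _).mpr (Or.inr (finite_singleton x)))
        ((hcl _).mpr (Or.inr (hfin.subset diff_subset))) (by simp) with h | h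
      · exact h
      · exact absurd rfl (h hx).2
    letI tY : TopologicalSpace ↥{A : Set X | IrredClosed A} :=
      lowerVietoris {A : Set X | IrredClosed A}
    letI tQ : TopologicalSpace Q := scottTop Q
    let T : ↥{A : Set X | IrredClosed A} := ⟨univ, huniv⟩
    let η : X → ↥{A : Set X | IrredClosed A} := fun x => ⟨{x}, hsing x⟩
    have hmono : ∀ a b : Q, a ≤ b → ((h.symm a : _) : Set X) ⊆ (h.symm b : _) := by
      intro a b hab
      by_contra hn
      have hVo : IsOpen {A : ↥{A : Set X | IrredClosed A} |
          ((A : Set X) ∩ ((h.symm b : _) : Set X)ᶜ).Nonempty} :=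
        TopologicalSpace.isOpen_generateFrom_of_mem
          ⟨_, (h.symm b).2.2.1.isOpen_compl, rfl⟩
      have hW : IsScottOpen (h.symm ⁻¹' _) := hVo.preimage h.symm.continuous
      have hb := hW.1 hab (by
        obtain ⟨x, hx, hx'⟩ := not_subset.mp hn
        exact ⟨x, hx, hx'⟩)
      obtain ⟨x, hx, hx'⟩ := hb
      exact hx' hx
    have htop : ∀ b : Q, h T ≤ b → b = h T := by
      intro b hb
      have := hmono _ _ hb
      rw [h.symm_apply_apply] at this
      have h2 : h.symm b = T := Subtype.ext (univ_subset_iff.mp this)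
      rw [← h2, h.apply_symm_apply]
    have hopen : IsScottOpen ({h T} : Set Q) := by
      refine ⟨?_, ?_⟩
      · intro a b hab ha
        rw [mem_singleton_iff] at ha ⊢
        rw [ha] at hab
        exact htop b hab
      · intro D hD hdir a ha haT
        rw [mem_singleton_iff] at haT
        rw [haT] at ha
        by_contra hno
        have hnT : ∀ d ∈ D, d ≠ h T := fun d hd e => hno ⟨d, hd, e⟩
        have hs : ∀ d ∈ D, ∃ x, ((h.symm d : _) : Set X) = {x} := by
          intro d hd
          refine hclass _ (h.symm d).2 fun e => hnT d hd ?_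
          have h2 : h.symm d = T := Subtype.ext e
          rw [← h2, h.apply_symm_apply]
        have hle : ∀ d ∈ D, ∀ e ∈ D, d ≤ e → d = e := by
          intro d hd e he hde
          obtain ⟨x, hx⟩ := hs d hd
          obtain ⟨y, hy⟩ := hs e he
          have h1 := hmono _ _ hde
          rw [hx, hy, singleton_subset_singleton] at h1
          apply h.symm.injective
          apply Subtype.ext
          rw [hx, hy, h1]
        obtain ⟨d, hd⟩ := hD
        refine hnT d hd (htop d (ha.2 ?_))
        intro e he
        obtain ⟨f, hf, hdf, hef⟩ := hdir d hd e he
        rw [hle d hd f hf hdf]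
        exact hef
    have hTo : IsOpen ({T} : Set ↥{A : Set X | IrredClosed A}) := by
      have h1 : IsOpen (h ⁻¹' ({h T} : Set Q)) :=
        IsOpen.preimage h.continuous hopen
      have h2 : h ⁻¹' ({h T} : Set Q) = {T} := by
        ext A
        simp
      rwa [h2] at h1
    have hgen : ∀ V : Set ↥{A : Set X | IrredClosed A}, IsOpen V → T ∈ V →
        (η ⁻¹' V)ᶜ.Finite := by
      intro V hV
      induction hV with
      | basic s hs =>
        obtain ⟨U, hU, rfl⟩ := hs
        rintro ⟨x, -, hx⟩
        rcases (ht U).mp hU with h0 | hf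
        · rw [h0] at hx
          exact absurd hx (by simp)
        · refine hf.subset fun y hy hyU => hy ⟨y, rfl, hyU⟩
      | univ => simp
      | inter s t _ _ ihs iht =>
        rintro ⟨h1, h2⟩
        rw [preimage_inter, compl_inter]
        exact (ihs h1).union (iht h2)
      | sUnion S _ ih =>
        rintro ⟨V, hVS, hTV⟩
        exact (ih V hVS hTV).subset fun y hy hyV => hy ⟨V, hVS, hyV⟩
    have hfin := hgen {T} hTo rfl
    refine infinite_univ (hfin.subset fun x _ hx => ?_)
    have hx2 : ({x} : Set X) = univ := congrArg Subtype.val hx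
    exact infinite_univ (hx2 ▸ finite_singleton x)
end

section
/- Let X be the set of all subsets of ℕ, equipped with the co-countable topology (the closed sets are the countable subsets of X and X itself). Then: (a) X is well-filtered; (b) the sobrification of X is not a Scott space, i.e. there is no poset Q such that P_H(irr_c(X)), the set of irreducible closed subsets of X with the lower Vietoris topology, is homeomorphic to Σ Q. -/
universe u v

open Set

theorem aux_isClosed_iff (tX : TopologicalSpace (Set ℕ))
    (ht : ∀ U : Set (Set ℕ), @IsOpen (Set ℕ) tX U ↔ U = ∅ ∨ Uᶜ.Countable)
    (F : Set (Set ℕ)) : @IsClosed (Set ℕ) tX F ↔ F = Set.univ ∨ F.Countable := by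
  rw [← @isOpen_compl_iff _ _ tX, ht, compl_compl, Set.compl_empty_iff]

theorem aux_finite (tX : TopologicalSpace (Set ℕ))
    (ht : ∀ U : Set (Set ℕ), @IsOpen (Set ℕ) tX U ↔ U = ∅ ∨ Uᶜ.Countable)
    (K : Set (Set ℕ)) (hK : @IsCompact (Set ℕ) tX K) : K.Finite := by
  by_contra hinf
  let f := Set.Infinite.natEmbedding K hinf
  let C : Set (Set ℕ) := Set.range fun n => (f n : Set ℕ)
  have hC : C.Countable := Set.countable_range _
  have hinj : Function.Injective fun n => (f n : Set ℕ) :=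
    Subtype.val_injective.comp f.injective
  have hCinf : C.Infinite := Set.infinite_range_of_injective hinj
  obtain ⟨t, ht'⟩ := hK.elim_finite_subcover (fun c : Set ℕ => (C \ {c})ᶜ)
    (fun c => (ht _).2 (Or.inr (by
      rw [compl_compl]; exact hC.mono Set.sdiff_subset)))
    (fun x _ => Set.mem_iUnion.2 ⟨x, by simp⟩)
  obtain ⟨c, hc, hct⟩ := hCinf.exists_notMem_finset t
  have hcK : c ∈ K := by
    obtain ⟨n, rfl⟩ := hc
    exact (f n).2
  obtain ⟨i, hi, hci⟩ := Set.mem_iUnion₂.1 (ht' hcK)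
  exact hci ⟨hc, fun h => hct (by rw [Set.mem_singleton_iff.1 h]; exact hi)⟩

theorem aux_wf (tX : TopologicalSpace (Set ℕ))
    (ht : ∀ U : Set (Set ℕ), @IsOpen (Set ℕ) tX U ↔ U = ∅ ∨ Uᶜ.Countable) :
    @WellFiltered (Set ℕ) tX := by
  refine ⟨?_, ?_⟩
  · have : T1Space (Set ℕ) := ⟨fun x =>
      (aux_isClosed_iff tX ht _).2 (Or.inr (Set.countable_singleton x))⟩
    infer_instance
  · intro 𝒦 hne hK hdir U _ hU
    obtain ⟨K, hK𝒦, hmin⟩ := exists_minimalFor_of_wellFoundedLT (· ∈ 𝒦) Set.ncard hne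
    refine ⟨K, hK𝒦, fun x hx => hU fun L hL => ?_⟩
    obtain ⟨M, hM, hMK, hML⟩ := hdir K hK𝒦 L hL
    have hfin := aux_finite tX ht K (hK K hK𝒦).2.1
    have h1 : K.ncard ≤ M.ncard := hmin hM (Set.ncard_le_ncard hMK hfin)
    have h2 : M = K := Set.eq_of_subset_of_ncard_le hMK h1 hfin
    exact hML (h2 ▸ hx)

theorem aux_not_countable_univ : ¬ (Set.univ : Set (Set ℕ)).Countable := by
  intro h
  have : Countable (Set ℕ) := Set.countable_univ_iff.1 h
  obtain ⟨f, hf⟩ := exists_injective_nat (Set ℕ)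
  exact Function.cantor_injective f hf

theorem aux_irr_univ (tX : TopologicalSpace (Set ℕ))
    (ht : ∀ U : Set (Set ℕ), @IsOpen (Set ℕ) tX U ↔ U = ∅ ∨ Uᶜ.Countable) :
    @IrredClosed (Set ℕ) tX Set.univ := by
  refine ⟨Set.univ_nonempty, isClosed_univ, fun F₁ F₂ h1 h2 h => ?_⟩
  rcases (aux_isClosed_iff tX ht _).1 h1 with rfl | h1
  · exact Or.inl le_rfl
  rcases (aux_isClosed_iff tX ht _).1 h2 with rfl | h2
  · exact Or.inr le_rfl
  exact absurd ((h1.union h2).mono h) aux_not_countable_univ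

theorem aux_irr_singleton (tX : TopologicalSpace (Set ℕ))
    (ht : ∀ U : Set (Set ℕ), @IsOpen (Set ℕ) tX U ↔ U = ∅ ∨ Uᶜ.Countable) (x : Set ℕ) :
    @IrredClosed (Set ℕ) tX {x} := by
  refine ⟨Set.singleton_nonempty x,
    (aux_isClosed_iff tX ht _).2 (Or.inr (Set.countable_singleton x)), fun F₁ F₂ _ _ h => ?_⟩
  simpa using h

theorem aux_irr_cases (tX : TopologicalSpace (Set ℕ))
    (ht : ∀ U : Set (Set ℕ), @IsOpen (Set ℕ) tX U ↔ U = ∅ ∨ Uᶜ.Countable)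
    (A : Set (Set ℕ)) (hA : @IrredClosed (Set ℕ) tX A) (hne : A ≠ Set.univ) :
    ∃ x, A = {x} := by
  obtain ⟨⟨x, hx⟩, hcl, hirr⟩ := hA
  have hc : A.Countable := ((aux_isClosed_iff tX ht _).1 hcl).resolve_left hne
  refine ⟨x, ?_⟩
  rcases hirr {x} (A \ {x}) ((aux_isClosed_iff tX ht _).2 (Or.inr (Set.countable_singleton x)))
    ((aux_isClosed_iff tX ht _).2 (Or.inr (hc.mono Set.sdiff_subset)))
    (fun y hy => by
      by_cases h : y = x
      · exact Or.inl h
      · exact Or.inr ⟨hy, h⟩) with h | h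
  · exact Set.Subset.antisymm h (Set.singleton_subset_iff.2 hx)
  · exact absurd rfl (h hx).2

theorem aux_open_top (tX : TopologicalSpace (Set ℕ))
    (ht : ∀ U : Set (Set ℕ), @IsOpen (Set ℕ) tX U ↔ U = ∅ ∨ Uᶜ.Countable)
    (S : Set ↥{A : Set (Set ℕ) | @IrredClosed (Set ℕ) tX A})
    (hS : @IsOpen _ (@lowerVietoris (Set ℕ) tX {A : Set (Set ℕ) | @IrredClosed (Set ℕ) tX A}) S)
    (htop : ⟨Set.univ, aux_irr_univ tX ht⟩ ∈ S) :
    {x : Set ℕ | (⟨{x}, aux_irr_singleton tX ht x⟩ :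
      ↥{A : Set (Set ℕ) | @IrredClosed (Set ℕ) tX A}) ∈ S}ᶜ.Countable := by
  induction hS with
  | basic s hs =>
    obtain ⟨U, hU, rfl⟩ := hs
    obtain ⟨y, -, hy⟩ := htop
    rcases (ht U).1 hU with rfl | hU
    · exact absurd hy (Set.notMem_empty y)
    · refine hU.mono (Set.compl_subset_compl.2 fun x hx => ?_)
      exact ⟨x, rfl, hx⟩
  | univ => simp
  | inter s t _ _ ihs iht =>
    refine ((ihs htop.1).union (iht htop.2)).mono fun x hx => ?_
    by_contra h
    rw [Set.mem_union, not_or, Set.notMem_compl_iff, Set.notMem_compl_iff] at h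
    exact hx ⟨h.1, h.2⟩
  | sUnion T _ ih =>
    obtain ⟨s, hs, hts⟩ := htop
    exact (ih s hs hts).mono (Set.compl_subset_compl.2 fun x hx => ⟨s, hs, hx⟩)

/-- The powerset of `ℕ` with the co-countable topology is well-filtered,
but its sobrification is not a Scott space. -/
theorem stmt15 (tX : TopologicalSpace (Set ℕ))
    (ht : ∀ U : Set (Set ℕ), @IsOpen (Set ℕ) tX U ↔ U = ∅ ∨ Uᶜ.Countable) :
    @WellFiltered (Set ℕ) tX ∧
    ¬ ∃ (Q : Type v) (pQ : PartialOrder Q),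
        Nonempty (@Homeomorph ↥{A : Set (Set ℕ) | @IrredClosed (Set ℕ) tX A} Q
          (@lowerVietoris (Set ℕ) tX {A : Set (Set ℕ) | @IrredClosed (Set ℕ) tX A})
          (@scottTop Q pQ.toPreorder)) := by
  refine ⟨aux_wf tX ht, ?_⟩
  rintro ⟨Q, pQ, ⟨h⟩⟩
  let tV := @lowerVietoris (Set ℕ) tX {A : Set (Set ℕ) | @IrredClosed (Set ℕ) tX A}
  let tQ : TopologicalSpace Q := scottTop Q
  let T : ↥{A : Set (Set ℕ) | @IrredClosed (Set ℕ) tX A} := ⟨Set.univ, aux_irr_univ tX ht⟩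
  have key : ∀ A B, h A ≤ h B → B ≠ T → A = B := by
    intro A B hAB hB
    obtain ⟨y, hy⟩ := aux_irr_cases tX ht B.1 B.2 (fun hh => hB (Subtype.ext hh))
    have hBU : ∀ U, IsOpen U → (A.1 ∩ U).Nonempty → (B.1 ∩ U).Nonempty := by
      intro U hU hAU
      have ho : IsOpen {A : ↥{A : Set (Set ℕ) | @IrredClosed (Set ℕ) tX A} |
          ((A : Set (Set ℕ)) ∩ U).Nonempty} :=
        TopologicalSpace.isOpen_generateFrom_of_mem ⟨U, hU, rfl⟩
      have ho' : IsScottOpen (h.symm ⁻¹' _) := ho.preimage h.symm.continuous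
      have := ho'.1 hAB (by simpa using hAU)
      simpa using this
    have hsub : A.1 ⊆ {y} := by
      intro x hx
      by_contra hxy
      obtain ⟨z, hz1, hz2⟩ := hBU {y}ᶜ
        ((ht _).2 (Or.inr (by simp))) ⟨x, hx, hxy⟩
      rw [hy] at hz1
      exact hz2 hz1
    refine Subtype.ext ?_
    rw [hy]
    exact (Set.Nonempty.subset_singleton_iff A.2.1).1 hsub
  have keyQ : ∀ p q : Q, p ≤ q → q ≠ h T → p = q := by
    intro p q hpq hq
    have := key (h.symm p) (h.symm q) (by simpa using hpq)
      (fun hh => hq (by rw [← hh]; simp))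
    exact h.symm.injective this
  have hopen : IsScottOpen ({h T} : Set Q) := by
    refine ⟨?_, ?_⟩
    · rintro a b hab rfl
      by_contra hb
      exact hb (keyQ _ _ hab hb).symm
    · rintro D ⟨d, hd⟩ hdir a ha rfl
      by_cases hD : h T ∈ D
      · exact ⟨h T, hD, rfl⟩
      exfalso
      have hall : ∀ d' ∈ D, d' = d := by
        intro d' hd'
        obtain ⟨e, he, h1, h2⟩ := hdir d hd d' hd'
        have hne : e ≠ h T := fun hh => hD (hh ▸ he)
        rw [keyQ _ _ h1 hne, keyQ _ _ h2 hne]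
      have h1 : h T ≤ d := ha.2 fun d' hd' => (hall d' hd').le
      have h2 : h T = d := le_antisymm h1 (ha.1 hd)
      exact hD (h2 ▸ hd)
  have hopenQ : IsOpen ({h T} : Set Q) := hopen
  have hc := aux_open_top tX ht (h ⁻¹' {h T}) (hopenQ.preimage h.continuous) rfl
  refine aux_not_countable_univ (Set.Countable.mono ?_ hc)
  intro x _ hx
  have h1 : (⟨{x}, aux_irr_singleton tX ht x⟩ :
    ↥{A : Set (Set ℕ) | @IrredClosed (Set ℕ) tX A}) = T := h.injective hx
  have h2 : ({x} : Set (Set ℕ)) = Set.univ := congrArg Subtype.val h1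
  exact aux_not_countable_univ (h2 ▸ Set.countable_singleton x)
end

section
/- Let 𝕁 = ℕ × (ℕ ∪ {ω}) be the Johnstone poset, ordered by (j, k) ≤ (m, n) iff (j = m and k ≤ n) or (n = ω and k ≤ m), and let 𝕁_⊤ be 𝕁 with a new largest element ⊤ adjoined. Then the Scott space Σ 𝕁_⊤ is not well-filtered. -/
universe u v

open Set

theorem john_le_iff (p q : Johnstone) : p ≤ q ↔
    (p.fst = q.fst ∧ p.snd ≤ q.snd) ∨ (q.snd = ⊤ ∧ p.snd ≤ (q.fst : WithTop ℕ)) := Iff.rfl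

/-- Elements `(m, ω)` are maximal. -/
theorem john_max {m : ℕ} {q : Johnstone} (h : (⟨m, ⊤⟩ : Johnstone) ≤ q) : q = ⟨m, ⊤⟩ := by
  obtain ⟨a, b⟩ := q
  rw [john_le_iff] at h
  rcases h with ⟨h1, h2⟩ | ⟨h1, h2⟩
  · simp only [top_le_iff] at h1 h2
    subst h1 h2
    rfl
  · simp at h2

/-- Directed sets in `𝕁` are bounded. -/
theorem john_bdd (D : Set Johnstone) (hne : D.Nonempty) (hd : DirectedOn (· ≤ ·) D) :
    ∃ b, ∀ d ∈ D, d ≤ b := by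
  by_cases h : ∃ m : ℕ, (⟨m, ⊤⟩ : Johnstone) ∈ D
  · obtain ⟨m, hm⟩ := h
    refine ⟨⟨m, ⊤⟩, fun d hdD => ?_⟩
    obtain ⟨c, _, h1, h2⟩ := hd _ hm _ hdD
    exact john_max h1 ▸ h2
  · obtain ⟨e, he⟩ := hne
    refine ⟨⟨e.fst, ⊤⟩, fun d hdD => ?_⟩
    obtain ⟨c, hc, h1, h2⟩ := hd _ he _ hdD
    have hct : c.snd ≠ ⊤ := by
      intro hh
      obtain ⟨a, b⟩ := c
      simp only at hh
      subst hh
      exact h ⟨a, hc⟩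
    rw [john_le_iff] at h1 h2 ⊢
    rcases h1 with h1 | h1
    · rcases h2 with h2 | h2
      · exact Or.inl ⟨h2.1.trans h1.1.symm, le_top⟩
      · exact absurd h2.1 hct
    · exact absurd h1.1 hct

theorem scott_top_open : IsScottOpen ({⊤} : Set (WithTop Johnstone)) := by
  refine ⟨?_, ?_⟩
  · intro a b hab ha
    rw [mem_singleton_iff] at ha ⊢
    exact top_le_iff.mp (ha ▸ hab)
  · intro D hne hd a ha haU
    rw [mem_singleton_iff] at haU
    subst haU
    by_contra hcon
    have hnt : (⊤ : WithTop Johnstone) ∉ D := fun h => hcon ⟨⊤, h, rfl⟩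
    have hlift : ∀ d ∈ D, ∃ x : Johnstone, d = (x : WithTop Johnstone) := by
      intro d hdD
      induction d with
      | top => exact absurd hdD hnt
      | coe x => exact ⟨x, rfl⟩
    obtain ⟨b, hb⟩ := john_bdd {x : Johnstone | (x : WithTop Johnstone) ∈ D} (by
      obtain ⟨d, hdD⟩ := hne
      obtain ⟨x, rfl⟩ := hlift d hdD
      exact ⟨x, hdD⟩) (by
      intro x hx y hy
      obtain ⟨c, hc, h1, h2⟩ := hd _ hx _ hy
      obtain ⟨z, rfl⟩ := hlift c hc
      exact ⟨z, hc, WithTop.coe_le_coe.mp h1, WithTop.coe_le_coe.mp h2⟩)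
    have : (⊤ : WithTop Johnstone) ≤ (b : WithTop Johnstone) := ha.2 (by
      intro d hdD
      obtain ⟨x, rfl⟩ := hlift d hdD
      exact WithTop.coe_le_coe.mpr (hb x hdD))
    exact absurd (top_le_iff.mp this) (WithTop.coe_ne_top)

theorem scott_compl_Iic {P : Type*} [Preorder P] (x : P) : IsScottOpen (Iic x)ᶜ := by
  refine ⟨(isLowerSet_Iic x).compl, ?_⟩
  intro D _ _ a ha haU
  by_contra hcon
  refine haU (ha.2 fun d hd => ?_)
  by_contra hdx
  exact hcon ⟨d, hd, hdx⟩

theorem upper_saturated {P : Type*} [Preorder P] (K : Set P) (hK : IsUpperSet K) :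
    @Saturated P (scottTop P) K := by
  refine ⟨{U | ∃ x, x ∉ K ∧ U = (Iic x)ᶜ}, ?_, ?_⟩
  · rintro U ⟨x, _, rfl⟩
    exact scott_compl_Iic x
  · ext y
    constructor
    · rintro hy U ⟨x, hx, rfl⟩ hyx
      exact hx (hK hyx hy)
    · intro hy
      by_contra hyK
      exact hy _ ⟨y, hyK, rfl⟩ le_rfl

/-- The compact saturated sets. -/
def johnK (n : ℕ) : Set (WithTop Johnstone) :=
  {x | x = ⊤ ∨ ∃ m : ℕ, n ≤ m ∧ x = ((⟨m, ⊤⟩ : Johnstone) : WithTop Johnstone)}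

theorem johnK_upper (n : ℕ) : IsUpperSet (johnK n) := by
  rintro a b hab (rfl | ⟨m, hm, rfl⟩)
  · exact Or.inl (top_le_iff.mp hab)
  · induction b with
    | top => exact Or.inl rfl
    | coe q => exact Or.inr ⟨m, hm, by rw [john_max (WithTop.coe_le_coe.mp hab)]⟩

/-- The chain `(m, k)` has supremum `(m, ω)`. -/
theorem john_chain (m : ℕ) :
    IsLUB (range fun k : ℕ => ((⟨m, (k : WithTop ℕ)⟩ : Johnstone) : WithTop Johnstone))
      ((⟨m, ⊤⟩ : Johnstone) : WithTop Johnstone) := by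
  constructor
  · rintro _ ⟨k, rfl⟩
    exact WithTop.coe_le_coe.mpr (Or.inl ⟨rfl, le_top⟩)
  · intro b hb
    induction b with
    | top => exact le_top
    | coe q =>
      have hq : ∀ k : ℕ, (⟨m, (k : WithTop ℕ)⟩ : Johnstone) ≤ q :=
        fun k => WithTop.coe_le_coe.mp (hb ⟨k, rfl⟩)
      obtain ⟨a, b⟩ := q
      refine WithTop.coe_le_coe.mpr (Or.inl ?_)
      have h1 := hq (a + 1)
      rw [john_le_iff] at h1
      have hna : ¬ (((a + 1 : ℕ) : WithTop ℕ) ≤ (a : WithTop ℕ)) := by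
        rw [Nat.cast_le]; omega
      rcases h1 with h1 | h1
      · refine ⟨h1.1, ?_⟩
        simp only at h1 ⊢
        induction b with
        | top => exact le_rfl
        | coe b =>
          have h2 := hq (b + 1)
          rw [john_le_iff] at h2
          rcases h2 with h2 | h2
          · have h3 := h2.2
            simp only at h3
            have h4 : b + 1 ≤ b := WithTop.coe_le_coe.mp h3
            omega
          · exact absurd h2.1 WithTop.coe_ne_top
      · exact absurd h1.2 hna

theorem john_open_tail {V : Set (WithTop Johnstone)} (hV : IsScottOpen V) {m : ℕ}
    (hm : ((⟨m, ⊤⟩ : Johnstone) : WithTop Johnstone) ∈ V) :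
    ∃ k : ℕ, ∀ j, k ≤ j → ((⟨j, ⊤⟩ : Johnstone) : WithTop Johnstone) ∈ V := by
  obtain ⟨_, ⟨k, rfl⟩, hk⟩ := hV.2 _ (range_nonempty _) (by
    rintro _ ⟨i, rfl⟩ _ ⟨j, rfl⟩
    refine ⟨_, ⟨max i j, rfl⟩, WithTop.coe_le_coe.mpr (Or.inl ⟨rfl, ?_⟩),
      WithTop.coe_le_coe.mpr (Or.inl ⟨rfl, ?_⟩)⟩
    · exact Nat.cast_le.mpr (le_max_left i j)
    · exact Nat.cast_le.mpr (le_max_right i j)) _ (john_chain m) hm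
  exact ⟨k, fun j hj => hV.1 (WithTop.coe_le_coe.mpr (Or.inr ⟨rfl, Nat.cast_le.mpr hj⟩)) hk⟩

theorem johnK_compact (n : ℕ) : @IsCompact _ (scottTop (WithTop Johnstone)) (johnK n) := by
  classical
  letI := scottTop (WithTop Johnstone)
  apply isCompact_of_finite_subcover
  intro ι U hU hcov
  obtain ⟨i, hi⟩ := mem_iUnion.mp (hcov (Or.inr ⟨n, le_rfl, rfl⟩))
  obtain ⟨k, hk⟩ := john_open_tail (hU i) hi
  have hfin : (johnK n \ U i).Finite := by
    refine ((finite_Iio k).image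
      (fun j : ℕ => ((⟨j, ⊤⟩ : Johnstone) : WithTop Johnstone))).subset ?_
    rintro x ⟨rfl | ⟨m, _, rfl⟩, hx⟩
    · exact absurd ((hU i).1 le_top hi) hx
    · refine ⟨m, ?_, rfl⟩
      by_contra hlt
      exact hx (hk m (not_lt.mp hlt))
  obtain ⟨t, ht⟩ := hfin.isCompact.elim_finite_subcover U hU (diff_subset.trans hcov)
  refine ⟨insert i t, fun x hx => ?_⟩
  by_cases hxi : x ∈ U i
  · exact mem_biUnion (Finset.mem_insert_self i t) hxi
  · obtain ⟨j, hj, hxj⟩ := mem_iUnion₂.mp (ht ⟨hx, hxi⟩)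
    exact mem_biUnion (Finset.mem_insert_of_mem hj) hxj

/-- The Scott space of the Johnstone dcpo with a top adjoined, `Σ 𝕁_⊤`,
is not well-filtered. -/
theorem stmt16 :
    ¬ @WellFiltered (WithTop Johnstone) (scottTop (WithTop Johnstone)) := by
  rintro ⟨_, h⟩
  obtain ⟨_, ⟨n, rfl⟩, hn⟩ := h (range johnK) (range_nonempty _) (by
    rintro _ ⟨n, rfl⟩
    exact ⟨⟨⊤, Or.inl rfl⟩, johnK_compact n, upper_saturated _ (johnK_upper n)⟩) (by
    rintro _ ⟨i, rfl⟩ _ ⟨j, rfl⟩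
    refine ⟨_, ⟨max i j, rfl⟩, ?_, ?_⟩
    · rintro x (hx | ⟨m, hm, hx⟩)
      · exact Or.inl hx
      · exact Or.inr ⟨m, (le_max_left i j).trans hm, hx⟩
    · rintro x (hx | ⟨m, hm, hx⟩)
      · exact Or.inl hx
      · exact Or.inr ⟨m, (le_max_right i j).trans hm, hx⟩) {⊤} scott_top_open (by
    intro x hx
    rcases hx _ ⟨0, rfl⟩ with h0 | ⟨m, _, rfl⟩
    · exact h0
    · rcases hx _ ⟨m + 1, rfl⟩ with h0 | ⟨m', hm', he⟩
      · exact h0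
      · have h1 := congrArg Johnstone.fst (WithTop.coe_injective he)
        simp only at h1
        omega)
  exact absurd (hn (Or.inr ⟨n, le_rfl, rfl⟩)) WithTop.coe_ne_top
end

section
/- Let 𝕁 = ℕ × (ℕ ∪ {ω}) be the Johnstone poset, ordered by (j, k) ≤ (m, n) iff (j = m and k ≤ n) or (n = ω and k ≤ m). Then: (a) there is no poset Q such that the sobrification P_H(irr_c(Σ 𝕁)) of the Scott space Σ 𝕁 is homeomorphic to Σ Q; (b) there is no poset Q such that Σ Q is well-filtered and there exists a continuous map μ : Σ 𝕁 → Σ Q making ⟨Σ Q, μ⟩ a well-filtered reflection of Σ 𝕁, i.e. such that for every continuous map f from Σ 𝕁 to a well-filtered space Y there is a unique continuous f* : Σ Q → Y with f* ∘ μ = f. In other words, neither the sobrification nor the well-filtered reflection of the Johnstone space is a Scott space. -/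
universe u v

open Set

/-! ### Generalities: the sobrification -/

namespace Stmt17

/-- Irreducible closed sets. -/
abbrev Irr (X : Type u) [TopologicalSpace X] : Type u := ↥{A : Set X | IrredClosed A}

/-- The lower Vietoris topology on the irreducible closed sets. -/
abbrev irrTop (X : Type u) [TopologicalSpace X] : TopologicalSpace (Irr X) :=
  lowerVietoris {A : Set X | IrredClosed A}

attribute [local instance] irrTop

section general
variable {X : Type u} [TopologicalSpace X]

/-- The set of irreducible closed sets meeting `U`. -/
def dia (U : Set X) : Set (Irr X) := {A | ((A : Set X) ∩ U).Nonempty}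

theorem irred_open {A : Set X} (hA : IrredClosed A) {U V : Set X} (hU : IsOpen U) (hV : IsOpen V)
    (h1 : (A ∩ U).Nonempty) (h2 : (A ∩ V).Nonempty) : (A ∩ (U ∩ V)).Nonempty := by
  by_contra hne
  have hsub : A ⊆ Uᶜ ∪ Vᶜ := by
    intro a ha
    by_contra hc
    apply hne
    refine ⟨a, ha, ?_⟩
    simpa [not_or] using hc
  obtain ⟨a, ha, haU⟩ := h1
  obtain ⟨b, hb, hbV⟩ := h2
  rcases hA.2.2 _ _ hU.isClosed_compl hV.isClosed_compl hsub with h | h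
  · exact h ha haU
  · exact h hb hbV

theorem isOpen_dia {U : Set X} (hU : IsOpen U) : IsOpen (dia U) :=
  TopologicalSpace.isOpen_generateFrom_of_mem ⟨U, hU, rfl⟩

theorem open_eq_dia {W : Set (Irr X)} (hW : IsOpen W) : ∃ U : Set X, IsOpen U ∧ W = dia U := by
  have hW' : TopologicalSpace.GenerateOpen _ W := hW
  induction hW' with
  | basic s hs => exact hs
  | univ =>
    refine ⟨univ, isOpen_univ, ?_⟩
    ext A
    simpa [dia] using A.2.1
  | inter s t hs ht ih1 ih2 =>
    obtain ⟨U, hU, rfl⟩ := ih1 hs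
    obtain ⟨V, hV, rfl⟩ := ih2 ht
    refine ⟨U ∩ V, hU.inter hV, ?_⟩
    ext A
    constructor
    · rintro ⟨h1, h2⟩
      exact irred_open A.2 hU hV h1 h2
    · rintro ⟨a, ha, h1, h2⟩
      exact ⟨⟨a, ha, h1⟩, ⟨a, ha, h2⟩⟩
  | sUnion S hS ih =>
    refine ⟨⋃₀ {U | IsOpen U ∧ dia U ∈ S}, isOpen_sUnion fun U hU => hU.1, ?_⟩
    ext A
    constructor
    · rintro ⟨s, hs, hA⟩
      obtain ⟨U, hU, rfl⟩ := ih s hs (hS s hs)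
      obtain ⟨a, ha, haU⟩ := hA
      exact ⟨a, ha, U, ⟨hU, hs⟩, haU⟩
    · rintro ⟨a, ha, U, ⟨_, hUS⟩, haU⟩
      exact ⟨dia U, hUS, a, ha, haU⟩

theorem closed_eq_box {W : Set (Irr X)} (hW : IsClosed W) :
    ∃ C : Set X, IsClosed C ∧ W = {A : Irr X | (A : Set X) ⊆ C} := by
  obtain ⟨U, hU, h⟩ := open_eq_dia hW.isOpen_compl
  refine ⟨Uᶜ, hU.isClosed_compl, ?_⟩
  rw [← compl_compl W, h]
  ext A
  simp only [dia, mem_compl_iff, mem_setOf_eq, not_nonempty_iff_eq_empty]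
  rw [← disjoint_iff_inter_eq_empty, subset_compl_iff_disjoint_right]

theorem isClosed_box {C : Set X} (hC : IsClosed C) :
    IsClosed {A : Irr X | (A : Set X) ⊆ C} := by
  rw [← isOpen_compl_iff]
  convert isOpen_dia hC.isOpen_compl using 1
  ext A
  simp only [dia, mem_compl_iff, mem_setOf_eq]
  rw [inter_compl_nonempty_iff]

theorem closure_irr (A : Irr X) : closure ({A} : Set (Irr X)) = {B : Irr X | (B : Set X) ⊆ A} := by
  apply subset_antisymm
  · exact closure_minimal (by simp) (isClosed_box A.2.2.1)
  · intro B hB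
    obtain ⟨C, hC, h⟩ := closed_eq_box (isClosed_closure (s := ({A} : Set (Irr X))))
    have hA : A ∈ closure ({A} : Set (Irr X)) := subset_closure rfl
    rw [h] at hA ⊢
    exact Subset.trans hB hA

theorem irred_closure (x : X) : IrredClosed (closure ({x} : Set X)) := by
  refine ⟨⟨x, subset_closure rfl⟩, isClosed_closure, fun F₁ F₂ h1 h2 h => ?_⟩
  rcases h (subset_closure rfl) with h | h
  · exact Or.inl (closure_minimal (by simpa using h) h1)
  · exact Or.inr (closure_minimal (by simpa using h) h2)

/-- The unit of the sobrification. -/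
def eta (x : X) : Irr X := ⟨closure {x}, irred_closure x⟩

theorem eta_mem_dia {U : Set X} (hU : IsOpen U) (x : X) : eta x ∈ dia U ↔ x ∈ U := by
  constructor
  · rintro ⟨y, hy, hyU⟩
    obtain ⟨z, hz, hz'⟩ := mem_closure_iff.1 hy U hU hyU
    rw [mem_singleton_iff] at hz'
    exact hz' ▸ hz
  · intro h
    exact ⟨x, subset_closure rfl, h⟩

theorem continuous_eta : Continuous (eta : X → Irr X) := by
  refine continuous_def.2 fun W hW => ?_
  obtain ⟨U, hU, rfl⟩ := open_eq_dia hW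
  convert hU using 1
  ext x
  exact eta_mem_dia hU x

theorem t0_irr : T0Space (Irr X) := by
  refine ⟨fun A B h => ?_⟩
  have h1 := inseparable_iff_closure_eq.1 h
  rw [closure_irr, closure_irr] at h1
  apply Subtype.ext
  apply subset_antisymm
  · have : A ∈ {C : Irr X | (C : Set X) ⊆ B} := by rw [← h1]; exact Subset.rfl
    exact this
  · have : B ∈ {C : Irr X | (C : Set X) ⊆ A} := by rw [h1]; exact Subset.rfl
    exact this

theorem sober_irr : ∀ W : Set (Irr X), IrredClosed W → ∃ A : Irr X, W = closure {A} := by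
  intro W hW
  obtain ⟨D, hD, rfl⟩ := closed_eq_box hW.2.1
  have hDi : IrredClosed D := by
    obtain ⟨A, hA⟩ := hW.1
    refine ⟨A.2.1.mono hA, hD, fun F₁ F₂ h1 h2 h => ?_⟩
    have key : {A : Irr X | (A : Set X) ⊆ D} ⊆
        {A : Irr X | (A : Set X) ⊆ F₁} ∪ {A : Irr X | (A : Set X) ⊆ F₂} := by
      intro B hB
      exact B.2.2.2 F₁ F₂ h1 h2 (Subset.trans hB h)
    have aux : ∀ F : Set X, {A : Irr X | (A : Set X) ⊆ D} ⊆ {A : Irr X | (A : Set X) ⊆ F} →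
        D ⊆ F := by
      intro F hF d hd
      have : eta d ∈ {A : Irr X | (A : Set X) ⊆ D} :=
        closure_minimal (by simpa using hd) hD
      exact hF this (subset_closure rfl)
    rcases hW.2.2 _ _ (isClosed_box h1) (isClosed_box h2) key with h | h
    · exact Or.inl (aux _ h)
    · exact Or.inr (aux _ h)
  exact ⟨⟨D, hDi⟩, (closure_irr ⟨D, hDi⟩).symm⟩

theorem wf_of_sober (h0 : T0Space X)
    (hs : ∀ A : Set X, IrredClosed A → ∃ x : X, A = closure {x}) : WellFiltered X := by
  refine ⟨h0, fun 𝒦 hne hK hdir U hU hsub => ?_⟩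
  by_contra hcon
  push Not at hcon
  let S : Set (Set X) := {A | IsClosed A ∧ A ⊆ Uᶜ ∧ ∀ K ∈ 𝒦, (K ∩ A).Nonempty}
  have hUS : Uᶜ ∈ S := by
    refine ⟨hU.isClosed_compl, Subset.rfl, fun K hKm => ?_⟩
    rw [inter_compl_nonempty_iff]
    exact hcon K hKm
  obtain ⟨A, hAU, hAmin⟩ := zorn_superset_nonempty S (by
    intro c hc hchain hcne
    refine ⟨⋂₀ c, ⟨isClosed_sInter fun s hs => (hc hs).1, ?_, ?_⟩, fun s hs => sInter_subset_of_mem hs⟩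
    · obtain ⟨s, hs⟩ := hcne
      exact (sInter_subset_of_mem hs).trans (hc hs).2.1
    · intro K hKm
      have : Nonempty c := hcne.to_subtype
      rw [sInter_eq_iInter]
      by_contra hem
      rw [not_nonempty_iff_eq_empty] at hem
      obtain ⟨i, hi⟩ := (hK K hKm).2.1.elim_directed_family_closed
        (fun i : c => (i : Set X)) (fun i => (hc i.2).1) hem (by
          intro i j
          rcases hchain.total i.2 j.2 with h | h
          · exact ⟨i, Subset.rfl, h⟩
          · exact ⟨j, h, Subset.rfl⟩)
      exact ((hc i.2).2.2 K hKm).ne_empty hi) _ hUS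
  have hAS := hAmin.prop
  have hsm : ∀ F : Set X, IsClosed F → ¬ A ⊆ F → ∃ K ∈ 𝒦, K ∩ (A ∩ F) = ∅ := by
    intro F hF hn
    by_contra hc
    push Not at hc
    have hmem : A ∩ F ∈ S := ⟨hAS.1.inter hF, inter_subset_left.trans hAS.2.1, hc⟩
    exact hn ((hAmin.le_of_le hmem inter_subset_left).trans inter_subset_right)
  have hAirr : IrredClosed A := by
    obtain ⟨K, hKm⟩ := hne
    refine ⟨(hAS.2.2 K hKm).mono inter_subset_right, hAS.1, fun F₁ F₂ h1 h2 h => ?_⟩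
    by_contra hc
    rw [not_or] at hc
    obtain ⟨K1, hK1, e1⟩ := hsm F₁ h1 hc.1
    obtain ⟨K2, hK2, e2⟩ := hsm F₂ h2 hc.2
    obtain ⟨K3, hK3, l1, l2⟩ := hdir K1 hK1 K2 hK2
    obtain ⟨x, hx, hxA⟩ := hAS.2.2 K3 hK3
    rcases h hxA with hxF | hxF
    · exact (e1 ▸ (⟨l1 hx, hxA, hxF⟩ : x ∈ K1 ∩ (A ∩ F₁)) : x ∈ (∅ : Set X))
    · exact (e2 ▸ (⟨l2 hx, hxA, hxF⟩ : x ∈ K2 ∩ (A ∩ F₂)) : x ∈ (∅ : Set X))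
  obtain ⟨x, rfl⟩ := hs A hAirr
  have hxU : x ∈ U := by
    apply hsub
    intro K hKm
    obtain ⟨y, hyK, hy⟩ := hAS.2.2 K hKm
    obtain ⟨𝒰, h𝒰, rfl⟩ := (hK K hKm).2.2
    intro V hV
    obtain ⟨z, hz, hz'⟩ := mem_closure_iff.1 hy V (h𝒰 V hV) (hyK V hV)
    rw [mem_singleton_iff] at hz'
    exact hz' ▸ hz
  exact hAS.2.1 (subset_closure rfl) hxU

theorem wf_irr : WellFiltered (Irr X) := wf_of_sober t0_irr sober_irr

/-- If every irreducible closed set is sent to a set with a generic point, then a reflection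
is homeomorphic to the sobrification. -/
theorem reflection_homeo {X Z : Type} [TopologicalSpace X] [TopologicalSpace Z] (μ : X → Z)
    (hr : IsKReflection wfClass X ‹_› Z ‹_› μ)
    (hg : ∀ A : Irr X, ∃ z : Z, closure (μ '' (A : Set X)) = closure {z}) :
    Nonempty (Irr X ≃ₜ Z) := by
  obtain ⟨hZ, hμ, huniv⟩ := hr
  obtain ⟨f, ⟨hf, hfe⟩, -⟩ := huniv (Irr X) (irrTop X) wf_irr eta continuous_eta
  choose g hgs using hg
  have hT0 : T0Space Z := hZ.1
  have hgmem : ∀ (A : Irr X) (V : Set Z), IsOpen V → (g A ∈ V ↔ A ∈ dia (μ ⁻¹' V)) := by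
    intro A V hV
    have h1 : g A ∈ V ↔ ({g A} ∩ V).Nonempty := by simp
    rw [h1, ← closure_inter_open_nonempty_iff hV, ← hgs, closure_inter_open_nonempty_iff hV]
    constructor
    · rintro ⟨_, ⟨a, ha, rfl⟩, hv⟩
      exact ⟨a, ha, hv⟩
    · rintro ⟨a, ha, hv⟩
      exact ⟨_, ⟨a, ha, rfl⟩, hv⟩
  have hgc : Continuous g := by
    refine continuous_def.2 fun V hV => ?_
    convert isOpen_dia (hV.preimage hμ) using 1
    ext A
    exact hgmem A V hV
  have hge : g ∘ eta = μ := by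
    funext x
    refine (inseparable_iff_forall_isOpen.2 fun V hV => ?_).eq
    exact (hgmem _ V hV).trans (eta_mem_dia (hV.preimage hμ) x)
  have hgf : g ∘ f = id := by
    obtain ⟨k, -, hk⟩ := huniv Z _ hZ μ hμ
    rw [hk (g ∘ f) ⟨hgc.comp hf, by rw [Function.comp_assoc, hfe, hge]⟩,
      hk id ⟨continuous_id, rfl⟩]
  have hfg : ∀ A, f (g A) = A := by
    intro A
    have := t0_irr (X := X)
    refine (inseparable_iff_forall_isOpen.2 fun W hW => ?_).eq
    have hpre := hW.preimage (hf.comp hgc)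
    obtain ⟨U, hU, rfl⟩ := open_eq_dia hW
    obtain ⟨U', hU', h'⟩ := open_eq_dia hpre
    have hUU : U' = U := by
      ext x
      rw [← eta_mem_dia hU', ← h', ← eta_mem_dia hU]
      have : f (g (eta x)) = eta x := by
        have h1 : g (eta x) = μ x := congrFun hge x
        rw [h1]
        exact congrFun hfe x
      simp only [mem_preimage, Function.comp_apply, this]
    rw [hUU] at h'
    exact Set.ext_iff.1 h' A
  exact ⟨⟨⟨g, f, hfg, fun z => congrFun hgf z⟩, hgc, hf⟩⟩

end general

/-! ### Scott spaces and the Johnstone space -/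

theorem scott_closure {Q : Type u} [PartialOrder Q] (q : Q) :
    @closure Q (scottTop Q) {q} = Iic q := by
  letI := scottTop Q
  apply subset_antisymm
  · refine closure_minimal (by simp) ?_
    rw [← isOpen_compl_iff]
    refine ⟨(isLowerSet_Iic q).compl, fun D _ _ a ha haq => ?_⟩
    by_contra hc
    apply haq
    refine ha.2 fun d hd => ?_
    by_contra hdq
    exact hc ⟨d, hd, hdq⟩
  · intro y hy
    rw [mem_closure_iff]
    intro U hU hyU
    exact ⟨q, hU.1 hy hyU, rfl⟩

abbrev jTop : TopologicalSpace Johnstone := scottTop Johnstone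

attribute [local instance] jTop

theorem jle {p q : Johnstone} : p ≤ q ↔ (p.fst = q.fst ∧ p.snd ≤ q.snd) ∨
    (q.snd = ⊤ ∧ p.snd ≤ (q.fst : WithTop ℕ)) := Iff.rfl

theorem top_max {j : ℕ} {q : Johnstone} (h : (⟨j, ⊤⟩ : Johnstone) ≤ q) : q = ⟨j, ⊤⟩ := by
  obtain ⟨a, b⟩ := q
  rcases h with ⟨h1, h2⟩ | ⟨h1, h2⟩
  · simp only [top_le_iff] at h1 h2
    rw [h1, h2]
  · simp at h2

theorem no_top (z : Johnstone) : ∃ y, ¬ y ≤ z := by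
  refine ⟨⟨z.fst + 1, ⊤⟩, fun h => ?_⟩
  have := congrArg Johnstone.fst (top_max h)
  simp at this

theorem directed_bdd {E : Set Johnstone} (hne : E.Nonempty) (hd : DirectedOn (· ≤ ·) E) :
    ∃ z, ∀ x ∈ E, x ≤ z := by
  by_cases h : ∃ j, (⟨j, ⊤⟩ : Johnstone) ∈ E
  · obtain ⟨j, hj⟩ := h
    refine ⟨⟨j, ⊤⟩, fun x hx => ?_⟩
    obtain ⟨w, -, h1, h2⟩ := hd x hx _ hj
    rwa [top_max h2] at h1
  · obtain ⟨e, he⟩ := hne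
    refine ⟨⟨e.fst, ⊤⟩, fun x hx => ?_⟩
    obtain ⟨w, hw, h1, h2⟩ := hd x hx e he
    have hwt : w.snd ≠ ⊤ := by
      intro hw'
      exact h ⟨w.fst, by rw [← hw']; exact hw⟩
    refine Or.inl ⟨?_, le_top⟩
    rcases h1 with h1 | h1
    · rcases h2 with h2 | h2
      · exact h1.1.trans h2.1.symm
      · exact absurd h2.1 hwt
    · exact absurd h1.1 hwt

theorem lub_column {j : ℕ} {E : Set ℕ} (hE : ∀ n, ∃ k ∈ E, n ≤ k) :
    IsLUB ((fun k : ℕ => (⟨j, (k : WithTop ℕ)⟩ : Johnstone)) '' E) ⟨j, ⊤⟩ := by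
  constructor
  · rintro _ ⟨k, _, rfl⟩
    exact Or.inl ⟨rfl, le_top⟩
  · intro b hb
    obtain ⟨b1, b2⟩ := b
    have hb' : ∀ k ∈ E, (⟨j, (k : WithTop ℕ)⟩ : Johnstone) ≤ ⟨b1, b2⟩ := fun k hk => hb ⟨k, hk, rfl⟩
    have hb2 : b2 = ⊤ := by
      induction b2 with
      | top => rfl
      | coe n =>
        obtain ⟨k, hk, hnk⟩ := hE (n + 1)
        rcases hb' k hk with h | h
        · have := h.2
          simp only [WithTop.coe_le_coe, Nat.cast_withTop] at this
          omega
        · exact absurd h.1 (by simp)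
    subst hb2
    obtain ⟨k, hk, hbk⟩ := hE (b1 + 1)
    rcases hb' k hk with h | h
    · exact Or.inl ⟨h.1, le_rfl⟩
    · have := h.2
      simp only [Nat.cast_le] at this
      omega

theorem directed_column {j : ℕ} {E : Set ℕ} : DirectedOn (· ≤ ·)
    ((fun k : ℕ => (⟨j, (k : WithTop ℕ)⟩ : Johnstone)) '' E) := by
  rintro _ ⟨a, ha, rfl⟩ _ ⟨b, hb, rfl⟩
  rcases le_total a b with h | h
  · exact ⟨_, ⟨b, hb, rfl⟩, Or.inl ⟨rfl, by simpa using h⟩, le_rfl⟩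
  · exact ⟨_, ⟨a, ha, rfl⟩, le_rfl, Or.inl ⟨rfl, by simpa using h⟩⟩

/-- Every nonempty open set contains cofinitely many top points. -/
theorem open_tail {U : Set Johnstone} (hU : IsOpen U) (hne : U.Nonempty) :
    ∃ n : ℕ, ∀ j, n ≤ j → (⟨j, ⊤⟩ : Johnstone) ∈ U := by
  obtain ⟨x, hx⟩ := hne
  have hx' : (⟨x.fst, ⊤⟩ : Johnstone) ∈ U := hU.1 (show x ≤ ⟨x.fst, ⊤⟩ from Or.inl ⟨rfl, le_top⟩) hx
  obtain ⟨_, ⟨k, -, rfl⟩, hk⟩ := hU.2 _ (Set.Nonempty.image _ univ_nonempty) directed_column _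
    (lub_column (E := univ) fun n => ⟨n, trivial, le_rfl⟩) hx'
  refine ⟨k, fun j hj => hU.1 (Or.inr ⟨rfl, ?_⟩) hk⟩
  simpa using hj

theorem closed_lower {A : Set Johnstone} (hA : IsClosed A) : IsLowerSet A := by
  have := hA.isOpen_compl.1.compl
  rwa [compl_compl] at this

theorem closed_sup {A : Set Johnstone} (hA : IsClosed A) {D : Set Johnstone} (hne : D.Nonempty)
    (hd : DirectedOn (· ≤ ·) D) {a} (ha : IsLUB D a) (h : D ⊆ A) : a ∈ A := by
  by_contra hc
  obtain ⟨d, hd1, hd2⟩ := hA.isOpen_compl.2 D hne hd a ha hc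
  exact hd2 (h hd1)

theorem univ_irred : IrredClosed (univ : Set Johnstone) := by
  refine ⟨⟨⟨0, 0⟩, trivial⟩, isClosed_univ, fun F₁ F₂ h1 h2 h => ?_⟩
  by_contra hc
  rw [not_or, univ_subset_iff, univ_subset_iff, ← ne_eq, ← ne_eq, ← nonempty_compl,
    ← nonempty_compl] at hc
  obtain ⟨n, hn⟩ := open_tail h1.isOpen_compl hc.1
  obtain ⟨m, hm⟩ := open_tail h2.isOpen_compl hc.2
  rcases h (mem_univ ⟨max n m, ⊤⟩) with h | h
  · exact hn _ (le_max_left _ _) h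
  · exact hm _ (le_max_right _ _) h

theorem lub_finite {D : Set Johnstone} (hne : D.Nonempty) (hd : DirectedOn (· ≤ ·) D)
    {m k : ℕ} (h : IsLUB D ⟨m, (k : WithTop ℕ)⟩) : (⟨m, (k : WithTop ℕ)⟩ : Johnstone) ∈ D := by
  have hcol : ∀ d ∈ D, d.fst = m ∧ d.snd ≤ (k : WithTop ℕ) := by
    intro d hdD
    rcases h.1 hdD with h' | h'
    · exact h'
    · exact absurd h'.1 (by simp)
  -- the heights of the elements of D
  let E : Set ℕ := {n | (⟨m, (n : WithTop ℕ)⟩ : Johnstone) ∈ D}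
  have hDE : ∀ d ∈ D, ∃ n : ℕ, n ∈ E ∧ d = ⟨m, (n : WithTop ℕ)⟩ := by
    rintro ⟨d1, d2⟩ hdD
    obtain ⟨h1, h2⟩ := hcol _ hdD
    simp only at h1 h2
    subst h1
    induction d2 with
    | top => simp at h2
    | coe n => exact ⟨n, hdD, rfl⟩
  have hEne : E.Nonempty := by
    obtain ⟨d, hdD⟩ := hne
    obtain ⟨n, hn, -⟩ := hDE d hdD
    exact ⟨n, hn⟩
  have hEb : BddAbove E := ⟨k, fun n hn => by simpa using (hcol _ hn).2⟩
  have hs := Nat.sSup_mem hEne hEb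
  have hle : (⟨m, (k : WithTop ℕ)⟩ : Johnstone) ≤ ⟨m, ((sSup E : ℕ) : WithTop ℕ)⟩ := by
    apply h.2
    intro d hdD
    obtain ⟨n, hn, rfl⟩ := hDE d hdD
    exact Or.inl ⟨rfl, by simpa using le_csSup hEb hn⟩
  have := le_antisymm hle (h.1 hs)
  rw [this]
  exact hs

/-- The irreducible closed sets of the Johnstone space. -/
theorem irred_class {A : Set Johnstone} (hA : IrredClosed A) : (∃ x, A = Iic x) ∨ A = univ := by
  have hlow := closed_lower hA.2.1
  have hsub : ∀ x ∈ A, Iic x ⊆ A := fun x hx y hy => hlow hy hx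
  have hcl : ∀ x : Johnstone, IsClosed (Iic x) := fun x => by
    rw [← scott_closure]; exact isClosed_closure
  by_cases hmax : ∃ m k : ℕ, (⟨m, (k : WithTop ℕ)⟩ : Johnstone) ∈ A ∧
      ∀ y ∈ A, (⟨m, (k : WithTop ℕ)⟩ : Johnstone) ≤ y → y = ⟨m, (k : WithTop ℕ)⟩
  · obtain ⟨m, k, hmem, hmx⟩ := hmax
    left
    refine ⟨⟨m, (k : WithTop ℕ)⟩, ?_⟩
    have hF2 : IsClosed (A \ {⟨m, (k : WithTop ℕ)⟩}) := by
      rw [← isOpen_compl_iff]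
      refine ⟨?_, ?_⟩
      · rw [isUpperSet_compl]
        rintro y z hzy ⟨hy, hyx⟩
        refine ⟨hlow hzy hy, fun hz => hyx ?_⟩
        rw [mem_singleton_iff] at hz
        subst hz
        exact hmx y hy hzy
      · intro D hne hd a ha haF
        by_contra hc
        have hDF : D ⊆ A \ {⟨m, (k : WithTop ℕ)⟩} := by
          intro d hdD
          by_contra hdF
          exact hc ⟨d, hdD, hdF⟩
        apply haF
        refine ⟨closed_sup hA.2.1 hne hd ha (hDF.trans diff_subset), fun hax => ?_⟩
        rw [mem_singleton_iff] at hax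
        subst hax
        exact (hDF (lub_finite hne hd ha)).2 rfl
    rcases hA.2.2 _ _ (hcl ⟨m, (k : WithTop ℕ)⟩) hF2 (by
      intro y hy
      by_cases h : y = ⟨m, (k : WithTop ℕ)⟩
      · left; exact mem_Iic.2 h.le
      · right; exact ⟨hy, h⟩) with h | h
    · exact subset_antisymm h (hsub _ hmem)
    · exact absurd rfl (h hmem).2
  · push Not at hmax
    have hcover : ∀ x ∈ A, ∃ j : ℕ, (⟨j, ⊤⟩ : Johnstone) ∈ A ∧ x ≤ ⟨j, ⊤⟩ := by
      rintro ⟨m, n⟩ hx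
      induction n with
      | top => exact ⟨m, hx, le_rfl⟩
      | coe n =>
        let E : Set ℕ := {n | (⟨m, (n : WithTop ℕ)⟩ : Johnstone) ∈ A}
        have hnE : n ∈ E := hx
        by_cases hb : BddAbove E
        · have hs := Nat.sSup_mem ⟨n, hnE⟩ hb
          obtain ⟨y, hyA, hy1, hy2⟩ := hmax m (sSup E) hs
          have hns : (⟨m, (n : WithTop ℕ)⟩ : Johnstone) ≤ ⟨m, ((sSup E : ℕ) : WithTop ℕ)⟩ :=
            Or.inl ⟨rfl, by
              have := le_csSup hb hnE
              show (n : WithTop ℕ) ≤ ((sSup E : ℕ) : WithTop ℕ)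
              exact_mod_cast this⟩
          obtain ⟨y1, y2⟩ := y
          induction y2 with
          | top => exact ⟨y1, hyA, hns.trans hy1⟩
          | coe l =>
            exfalso
            rcases hy1 with h | h
            · obtain ⟨h1, h2⟩ := h
              simp only at h1 h2
              subst h1
              have hl : l ∈ E := hyA
              have h3 := le_csSup hb hl
              have h4 : sSup E ≤ l := WithTop.coe_le_coe.1 h2
              apply hy2
              rw [le_antisymm h4 h3]
              rfl
            · exact absurd h.1 (by simp)
        · refine ⟨m, ?_, Or.inl ⟨rfl, le_top⟩⟩
          rw [not_bddAbove_iff] at hb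
          refine closed_sup hA.2.1 (D := (fun k : ℕ => (⟨m, (k : WithTop ℕ)⟩ : Johnstone)) '' E)
            ⟨_, n, hnE, rfl⟩ directed_column (lub_column fun n => ?_) ?_
          · obtain ⟨k, hk, hnk⟩ := hb n
            exact ⟨k, hk, hnk.le⟩
          · rintro _ ⟨k, hk, rfl⟩
            exact hk
    let S : Set ℕ := {j | (⟨j, ⊤⟩ : Johnstone) ∈ A}
    by_cases hS : S.Finite
    · left
      have key : ∀ T : Set ℕ, T.Finite → A ⊆ (⋃ j ∈ T, Iic (⟨j, ⊤⟩ : Johnstone)) →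
          ∃ j ∈ T, A ⊆ Iic (⟨j, ⊤⟩ : Johnstone) := by
        intro T hT
        induction T, hT using Set.Finite.induction_on with
        | empty =>
          intro h
          obtain ⟨a, ha⟩ := hA.1
          simpa using h ha
        | @insert a s ha hs ih =>
          intro h
          rw [biUnion_insert] at h
          rcases hA.2.2 _ _ (hcl _) (hs.isClosed_biUnion fun j _ => hcl _) h with h | h
          · exact ⟨a, mem_insert _ _, h⟩
          · obtain ⟨j, hj, hj'⟩ := ih h
            exact ⟨j, mem_insert_of_mem _ hj, hj'⟩
      obtain ⟨j, hj, hj'⟩ := key S hS (by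
        intro x hx
        obtain ⟨j, hj, hxj⟩ := hcover x hx
        exact mem_biUnion (show j ∈ S from hj) hxj)
      exact ⟨_, subset_antisymm hj' (hsub _ hj)⟩
    · right
      by_contra hc
      obtain ⟨n, hn⟩ := open_tail hA.2.1.isOpen_compl (nonempty_compl.2 hc)
      apply hS
      refine (finite_lt_nat n).subset fun j hj => ?_
      by_contra hjn
      exact hn j (by simpa using hjn) hj

/-- The sobrification is not a Scott space. -/
theorem not_scott {Q : Type v} [PartialOrder Q]
    (h : @Homeomorph (Irr Johnstone) Q (irrTop Johnstone) (scottTop Q)) : False := by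
  letI := scottTop Q
  let T : Irr Johnstone := ⟨univ, univ_irred⟩
  have hle : ∀ A B : Irr Johnstone, h A ≤ h B ↔ (A : Set Johnstone) ⊆ B := by
    intro A B
    have h1 : h A ≤ h B ↔ h A ∈ closure ({h B} : Set Q) := by rw [scott_closure]; rfl
    have h2 : closure ({h B} : Set Q) = h '' closure {B} := by
      rw [h.image_closure, image_singleton]
    rw [h1, h2, h.injective.mem_set_image, closure_irr]
    rfl
  have hopen : IsOpen ({h T} : Set Q) := by
    refine ⟨?_, ?_⟩
    · rintro _ y hy rfl
      obtain ⟨B, rfl⟩ := h.surjective y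
      rw [mem_singleton_iff]
      exact le_antisymm ((hle _ _).2 (subset_univ _)) hy
    · rintro D hne hd _ ha rfl
      by_contra hc
      have hD : ∀ d ∈ D, ∃ x : Johnstone, d = h (eta x) := by
        intro d hdD
        obtain ⟨B, rfl⟩ := h.surjective d
        rcases irred_class B.2 with ⟨x, hx⟩ | hB
        · exact ⟨x, congrArg h (Subtype.ext (hx.trans (scott_closure x).symm))⟩
        · exfalso
          apply hc
          refine ⟨_, hdD, ?_⟩
          rw [mem_singleton_iff]
          exact congrArg h (Subtype.ext hB)
      have hle' : ∀ x y : Johnstone, h (eta x) ≤ h (eta y) ↔ x ≤ y := by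
        intro x y
        rw [hle]
        show closure {x} ⊆ closure {y} ↔ _
        rw [scott_closure, scott_closure, Iic_subset_Iic]
      obtain ⟨z, hz⟩ := directed_bdd (E := {x | h (eta x) ∈ D}) (by
        obtain ⟨d, hdD⟩ := hne
        obtain ⟨x, rfl⟩ := hD d hdD
        exact ⟨x, hdD⟩) (by
        intro x hx y hy
        obtain ⟨w, hw, h1, h2⟩ := hd _ hx _ hy
        obtain ⟨u, rfl⟩ := hD w hw
        exact ⟨u, hw, (hle' _ _).1 h1, (hle' _ _).1 h2⟩)
      have hT : h T ≤ h (eta z) := by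
        apply ha.2
        intro d hdD
        obtain ⟨x, rfl⟩ := hD d hdD
        exact (hle' _ _).2 (hz x hdD)
      rw [hle] at hT
      obtain ⟨y, hy⟩ := no_top z
      have := hT (mem_univ y)
      apply hy
      change y ∈ closure {z} at this
      rwa [scott_closure] at this
  have hpre : IsOpen (h ⁻¹' {h T}) := hopen.preimage h.continuous
  obtain ⟨U, hU, hUe⟩ := open_eq_dia hpre
  have hTm : T ∈ dia U := by rw [← hUe]; rfl
  obtain ⟨x, -, hx⟩ := hTm
  have hxm : eta x ∈ dia U := (eta_mem_dia hU x).2 hx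
  rw [← hUe] at hxm
  have hxT : eta x = T := h.injective hxm
  obtain ⟨y, hy⟩ := no_top x
  have hyx : y ∈ (eta x : Set Johnstone) := by rw [hxT]; trivial
  change y ∈ closure {x} at hyx
  rw [scott_closure] at hyx
  exact hy hyx

theorem generic_image {Z : Type} [TopologicalSpace Z] (hZ : WellFiltered Z) (μ : Johnstone → Z)
    (hμ : Continuous μ) (A : Irr Johnstone) :
    ∃ z : Z, closure (μ '' (A : Set Johnstone)) = closure {z} := by
  rcases irred_class A.2 with ⟨x, hx⟩ | hA
  · refine ⟨μ x, ?_⟩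
    rw [hx, ← scott_closure, closure_image_closure hμ, image_singleton]
  · rw [hA]
    let N : ℕ → Set Johnstone := fun n => {p | ∃ j, n ≤ j ∧ p = ⟨j, ⊤⟩}
    let sat : Set Z → Set Z := fun B => ⋂₀ {V | IsOpen V ∧ B ⊆ V}
    have hsat : ∀ B, B ⊆ sat B := fun B b hb V hV => hV.2 hb
    have hsatm : ∀ B V, IsOpen V → B ⊆ V → sat B ⊆ V := fun B V hV h =>
      sInter_subset_of_mem ⟨hV, h⟩
    have hNc : ∀ n, IsCompact (N n) := by
      intro n
      refine isCompact_of_finite_subcover fun {ι} U hU hcov => ?_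
      have h0 : (⟨n, ⊤⟩ : Johnstone) ∈ N n := ⟨n, le_rfl, rfl⟩
      obtain ⟨i, hi⟩ := mem_iUnion.1 (hcov h0)
      obtain ⟨m, hm⟩ := open_tail (hU i) ⟨_, hi⟩
      have hfin : IsCompact ((fun j : ℕ => (⟨j, ⊤⟩ : Johnstone)) '' {j | n ≤ j ∧ j < m}) :=
        (((finite_lt_nat m).subset fun j hj => hj.2).image _).isCompact
      obtain ⟨t, ht⟩ := hfin.elim_finite_subcover U hU (by
        rintro _ ⟨j, hj, rfl⟩
        exact hcov ⟨j, hj.1, rfl⟩)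
      classical
      refine ⟨insert i t, ?_⟩
      rintro _ ⟨j, hj, rfl⟩
      by_cases hjm : m ≤ j
      · exact mem_biUnion (Finset.mem_insert_self _ _) (hm j hjm)
      · have := ht ⟨j, ⟨hj, by omega⟩, rfl⟩
        obtain ⟨k, hk, hkU⟩ := mem_iUnion₂.1 this
        exact mem_biUnion (Finset.mem_insert_of_mem hk) hkU
    have hsc : ∀ B, IsCompact B → IsCompact (sat B) := by
      intro B hB
      refine isCompact_of_finite_subcover fun {ι} U hU hcov => ?_
      obtain ⟨t, ht⟩ := hB.elim_finite_subcover U hU ((hsat B).trans hcov)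
      exact ⟨t, hsatm _ _ (isOpen_biUnion fun i _ => hU i) ht⟩
    have hNanti : ∀ a b, a ≤ b → sat (μ '' N b) ⊆ sat (μ '' N a) := by
      intro a b hab
      refine sInter_subset_sInter ?_
      rintro V ⟨hV, hVs⟩
      refine ⟨hV, (image_mono ?_).trans hVs⟩
      rintro _ ⟨j, hj, rfl⟩
      exact ⟨j, hab.trans hj, rfl⟩
    have hex : ∃ q ∈ closure (μ '' univ), ∀ n, q ∈ sat (μ '' N n) := by
      by_contra hc
      push Not at hc
      obtain ⟨_, ⟨n, rfl⟩, hn⟩ := hZ.2 (range fun n => sat (μ '' N n)) (range_nonempty _) (by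
          rintro _ ⟨n, rfl⟩
          refine ⟨⟨μ ⟨n, ⊤⟩, hsat _ ⟨_, ⟨n, le_rfl, rfl⟩, rfl⟩⟩, hsc _ ((hNc n).image hμ), ?_⟩
          exact ⟨_, fun V hV => hV.1, rfl⟩) (by
          rintro _ ⟨a, rfl⟩ _ ⟨b, rfl⟩
          exact ⟨_, ⟨max a b, rfl⟩, hNanti _ _ (le_max_left _ _), hNanti _ _ (le_max_right _ _)⟩)
        (closure (μ '' univ))ᶜ isClosed_closure.isOpen_compl (by
          intro q hq hqc
          obtain ⟨n, hn⟩ := hc q hqc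
          exact hn (hq _ ⟨n, rfl⟩))
      exact hn (hsat _ ⟨⟨n, ⊤⟩, ⟨n, le_rfl, rfl⟩, rfl⟩) (subset_closure ⟨_, trivial, rfl⟩)
    obtain ⟨q, hq, hqn⟩ := hex
    refine ⟨q, subset_antisymm ?_ (closure_minimal (by simpa using hq) isClosed_closure)⟩
    refine closure_minimal ?_ isClosed_closure
    rintro _ ⟨x, -, rfl⟩
    rw [mem_closure_iff]
    intro V hV hx
    obtain ⟨n, hn⟩ := open_tail (hV.preimage hμ) ⟨x, hx⟩
    refine ⟨q, hsatm _ _ hV ?_ (hqn n), rfl⟩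
    rintro _ ⟨_, ⟨j, hj, rfl⟩, rfl⟩
    exact hn j hj

end Stmt17

/-- Neither the sobrification nor the well-filtered reflection of the
Johnstone space `Σ 𝕁` is a Scott space. -/
theorem stmt17 :
    (¬ ∃ (Q : Type v) (pQ : PartialOrder Q),
        Nonempty (@Homeomorph ↥{A : Set Johnstone | @IrredClosed Johnstone (scottTop Johnstone) A} Q
          (@lowerVietoris Johnstone (scottTop Johnstone)
            {A : Set Johnstone | @IrredClosed Johnstone (scottTop Johnstone) A})
          (@scottTop Q pQ.toPreorder))) ∧
    (¬ ∃ (Q : Type) (pQ : PartialOrder Q) (μ : Johnstone → Q),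
        IsKReflection wfClass Johnstone (scottTop Johnstone) Q
          (@scottTop Q pQ.toPreorder) μ) := by
  refine ⟨?_, ?_⟩
  · rintro ⟨Q, pQ, ⟨h⟩⟩
    exact Stmt17.not_scott h
  · rintro ⟨Q, pQ, μ, hr⟩
    letI := scottTop Johnstone
    letI := @scottTop Q pQ.toPreorder
    obtain ⟨h⟩ := Stmt17.reflection_homeo μ hr (Stmt17.generic_image hr.1 μ hr.2.1)
    exact Stmt17.not_scott h
end
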